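/- arXiv:2502.00526 — 6 statements merged into one kernel-verified Lean document; each statement's English description precedes it below -/
import Mathlib

section
/- Let m < 0 be a squarefree integer. If the class number of the imaginary quadratic field ℚ(√m) is odd, then m = −1, m = −2, or m = −q for some prime q ≡ 3 (mod 4). -/
open NumberField

lemma aux_rat_int (m k : ℤ) (hsf : Squarefree m) (q : ℚ) (h : (m : ℚ) * q ^ 2 = k) :
    ∃ y : ℤ, q = y := by
  have hd : (q.den : ℚ) ≠ 0 := by exact_mod_cast q.den_nz
  have h1 : m * q.num ^ 2 = k * (q.den : ℤ) ^ 2 := by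
    have : (m : ℚ) * q.num ^ 2 = k * (q.den : ℚ) ^ 2 := by
      rw [← h]
      have := Rat.mul_den_eq_num q
      rw [← this]; ring
    exact_mod_cast this
  have hc : IsCoprime ((q.den : ℤ) * q.den) (q.num ^ 2) := by
    have : IsCoprime (q.den : ℤ) q.num := by
      rw [Int.isCoprime_iff_gcd_eq_one, Int.gcd_comm]
      exact q.reduced
    exact (this.mul_left this).pow_right
  have h2 : (q.den : ℤ) * q.den ∣ m := by
    refine hc.dvd_of_dvd_mul_right ?_
    rw [h1]; exact ⟨k, by ring⟩
  have h3 := hsf _ h2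
  have h4 : q.den = 1 := by
    have := Int.isUnit_iff.mp h3
    omega
  exact ⟨q.num, ((Rat.den_eq_one_iff q).mp h4).symm⟩

lemma aux_norm_form (m : ℤ) (hm : m < 0) (hsf : Squarefree m)
    (K : Type) [Field K] [NumberField K]
    (hdeg : Module.finrank ℚ K = 2)
    (α : K) (hα : α ^ 2 = (m : K)) (β : 𝓞 K) :
    ∃ x y : ℤ, 4 * Algebra.norm ℤ β = x ^ 2 - m * y ^ 2 := by
  have hli : LinearIndependent ℚ ![(1 : K), α] := by
    rw [LinearIndependent.pair_iff]
    intro s t hst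
    have ht : t = 0 := by
      by_contra ht
      have h1 : α = algebraMap ℚ K (-s / t) := by
        have ht' : (algebraMap ℚ K t) ≠ 0 := by simpa using ht
        rw [Algebra.smul_def, Algebra.smul_def] at hst
        rw [map_div₀, map_neg]
        field_simp
        linear_combination hst
      have h2 : algebraMap ℚ K ((-s / t) ^ 2) = algebraMap ℚ K m := by
        rw [map_pow, ← h1, hα]; simp
      have h3 := (algebraMap ℚ K).injective h2
      have h4 : (m : ℚ) < 0 := by exact_mod_cast hm
      nlinarith [sq_nonneg (-s / t)]
    subst ht
    simpa using hst
  let b : Module.Basis (Fin 2) ℚ K :=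
    basisOfLinearIndependentOfCardEqFinrank hli (by simp [hdeg])
  have hb0 : b 0 = 1 := by simp [b]
  have hb1 : b 1 = α := by simp [b]
  set r := b.repr (β : K) 0 with hr
  set s := b.repr (β : K) 1 with hs
  have hβ : (β : K) = r • (1 : K) + s • α := by
    have := b.sum_repr (β : K)
    rw [Fin.sum_univ_two, hb0, hb1] at this
    exact this.symm
  have hmat : Algebra.leftMulMatrix b (β : K) = !![r, m * s; s, r] := by
    have e0 : (β : K) * b 0 = r • b 0 + s • b 1 := by rw [hb0, hb1, mul_one]; exact hβ
    have e1 : (β : K) * b 1 = (m * s) • b 0 + r • b 1 := by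
      rw [hb0, hb1, hβ]
      simp only [Algebra.smul_def, map_mul, map_intCast]
      linear_combination (algebraMap ℚ K s) * hα
    ext i j
    rw [Algebra.leftMulMatrix_eq_repr_mul]
    fin_cases j
    · simp only [Fin.zero_eta, e0]
      fin_cases i <;> simp
    · simp only [Fin.mk_one, e1]
      fin_cases i <;> simp
  have hN : ((Algebra.norm ℤ β : ℤ) : ℚ) = r ^ 2 - m * s ^ 2 := by
    rw [Algebra.coe_norm_int, Algebra.norm_eq_matrix_det b, hmat, Matrix.det_fin_two_of]
    ring
  have hT : ((Algebra.trace ℤ _ β : ℤ) : ℚ) = 2 * r := by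
    rw [Algebra.coe_trace_int, Algebra.trace_eq_matrix_trace b, hmat, Matrix.trace_fin_two_of]
    ring
  obtain ⟨y, hy⟩ := aux_rat_int m ((Algebra.trace ℤ _ β) ^ 2 - 4 * Algebra.norm ℤ β) hsf (2 * s)
    (by push_cast; rw [hN, hT]; ring)
  refine ⟨Algebra.trace ℤ _ β, y, ?_⟩
  have : (4 * (Algebra.norm ℤ β : ℤ) : ℚ) = (Algebra.trace ℤ _ β : ℤ) ^ 2 - m * (y : ℚ) ^ 2 := by
    rw [hN, hT, ← hy]; ring
  exact_mod_cast this

lemma aux_key (m : ℤ) (hm : m < 0) (hsf : Squarefree m)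
    (K : Type) [Field K] [NumberField K]
    (hdeg : Module.finrank ℚ K = 2)
    (α : K) (hα : α ^ 2 = (m : K))
    (hodd : Odd (NumberField.classNumber K)) (I : Ideal (𝓞 K)) (a : ℤ) (ha : 0 < a)
    (hI : I ^ 2 = Ideal.span {(a : 𝓞 K)}) : ∃ x y : ℤ, x ^ 2 - m * y ^ 2 = 4 * a := by
  have ha' : (a : 𝓞 K) ≠ 0 := by exact_mod_cast ha.ne'
  have hI0 : I ≠ ⊥ := by
    rintro rfl
    rw [← Ideal.zero_eq_bot, zero_pow two_ne_zero, Ideal.zero_eq_bot, eq_comm,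
      Ideal.span_singleton_eq_bot] at hI
    exact ha' hI
  let J : nonZeroDivisors (Ideal (𝓞 K)) := ⟨I, mem_nonZeroDivisors_of_ne_zero hI0⟩
  have h2 : ClassGroup.mk0 J ^ 2 = 1 := by
    rw [← map_pow, ClassGroup.mk0_eq_one_iff]
    simp only [SubmonoidClass.coe_pow, J, hI]
    exact ⟨⟨_, rfl⟩⟩
  have h1 : ClassGroup.mk0 J = 1 := by
    have hc : ClassGroup.mk0 J ^ NumberField.classNumber K = 1 := pow_card_eq_one
    obtain ⟨k, hk⟩ := hodd
    rw [hk, pow_add, pow_mul, h2, one_pow, one_mul, pow_one] at hc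
    exact hc
  rw [ClassGroup.mk0_eq_one_iff] at h1
  obtain ⟨⟨β, hβ⟩⟩ := h1
  change I = Ideal.span {β} at hβ
  obtain ⟨x, y, hxy⟩ := aux_norm_form m hm hsf K hdeg α hα β
  refine ⟨x, y, ?_⟩
  rw [← hxy]
  have hn : Ideal.absNorm I ^ 2 = a.natAbs ^ 2 := by
    rw [← map_pow, hI, Ideal.absNorm_span_singleton]
    have : Algebra.norm ℤ (a : 𝓞 K) = a ^ 2 := by
      have := Algebra.norm_algebraMap (S := 𝓞 K) a
      rw [RingOfIntegers.rank, hdeg] at this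
      simpa using this
    rw [this, Int.natAbs_pow]
  rw [hβ, Ideal.absNorm_span_singleton] at hn
  have hn' := Nat.pow_left_injective two_ne_zero hn
  have hpos : 0 ≤ Algebra.norm ℤ β := by nlinarith [sq_nonneg x, sq_nonneg y]
  omega

/-- The square root of `m` as an algebraic integer. -/
lemma aux_root (m : ℤ) (K : Type) [Field K] [NumberField K]
    (α : K) (hα : α ^ 2 = (m : K)) : ∃ θ : 𝓞 K, θ ^ 2 = (m : 𝓞 K) := by
  have : IsIntegral ℤ α := by
    refine IsIntegral.of_pow (n := 2) (by norm_num) ?_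
    rw [hα]
    exact isIntegral_algebraMap (R := ℤ) (x := m)
  obtain ⟨θ, hθ⟩ : ∃ θ : 𝓞 K, algebraMap (𝓞 K) K θ = α := ⟨⟨α, this⟩, rfl⟩
  refine ⟨θ, ?_⟩
  apply FaithfulSMul.algebraMap_injective (𝓞 K) K
  rw [map_pow, map_intCast, hθ, hα]

lemma aux_ideal_sq {R : Type*} [CommRing R] (c t : R) (u v w : R)
    (h : t ^ 2 = c * w) (hu : ∃ z, u * c + v * t + z * w = 1) :
    (Ideal.span {c, t}) ^ 2 = Ideal.span {c} := by
  obtain ⟨z, hz⟩ := hu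
  apply le_antisymm
  · rw [pow_two, Ideal.span_pair_mul_span_pair, Ideal.span_le]
    intro s hs
    simp only [Set.mem_insert_iff, Set.mem_singleton_iff] at hs
    rw [SetLike.mem_coe, Ideal.mem_span_singleton]
    rcases hs with rfl | rfl | rfl | rfl
    · exact ⟨c, rfl⟩
    · exact ⟨t, rfl⟩
    · exact ⟨t, by ring⟩
    · exact ⟨w, by rw [← h]; ring⟩
  · rw [Ideal.span_singleton_le_iff_mem]
    have hc : c ∈ Ideal.span {c, t} := Ideal.subset_span (by simp)
    have ht : t ∈ Ideal.span {c, t} := Ideal.subset_span (by simp)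
    have : c = u * (c * c) + v * (c * t) + z * (t * t) := by
      linear_combination (-c) * hz - z * h
    have hmem : u * (c * c) + v * (c * t) + z * (t * t) ∈ Ideal.span {c, t} ^ 2 := by
     rw [pow_two]
     exact add_mem (add_mem (Ideal.mul_mem_left _ _ (Ideal.mul_mem_mul hc hc))
      (Ideal.mul_mem_left _ _ (Ideal.mul_mem_mul hc ht)))
      (Ideal.mul_mem_left _ _ (Ideal.mul_mem_mul ht ht))
    rwa [← this] at hmem

/-- Let `m < 0` be a squarefree integer. If the class number of the imaginary quadratic
field `ℚ(√m)` (formalized as any degree-2 number field containing a square root of `m`)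
is odd, then `m = −1`, `m = −2`, or `m = −q` for some prime `q ≡ 3 (mod 4)`. -/
theorem eq_of_odd_classNumber_imaginary_quadratic
    (m : ℤ) (hm : m < 0) (hsf : Squarefree m)
    (K : Type) [Field K] [NumberField K]
    (hdeg : Module.finrank ℚ K = 2)
    (α : K) (hα : α ^ 2 = (m : K))
    (hodd : Odd (NumberField.classNumber K)) :
    m = -1 ∨ m = -2 ∨ ∃ q : ℕ, q.Prime ∧ q % 4 = 3 ∧ m = -(q : ℤ) := by
  obtain ⟨θ, hθ⟩ := aux_root m K α hα
  by_cases h1 : m = -1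
  · exact Or.inl h1
  by_cases h2 : m = -2
  · exact Or.inr (Or.inl h2)
  refine Or.inr (Or.inr ⟨m.natAbs, ?_⟩)
  have hmn : m = -(m.natAbs : ℤ) := by omega
  have hp : m.natAbs.Prime := by
    by_contra hnp
    obtain ⟨a, hda, ha2, han⟩ := (Nat.not_prime_iff_exists_dvd_lt (by omega)).mp hnp
    obtain ⟨b, hb⟩ := hda
    have hb2 : 2 ≤ b := by
      by_contra hb2
      interval_cases b <;> omega
    have hm' : m = -((a : ℤ) * b) := by rw [hmn, hb]; push_cast; rfl
    have hsfn : Squarefree (a * b) := by rw [← hb]; exact Int.squarefree_natAbs.mpr hsf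
    have hcop : IsCoprime (a : ℤ) b := Nat.isCoprime_iff_coprime.mpr (Nat.coprime_of_squarefree_mul hsfn)
    obtain ⟨u, v, huv⟩ := hcop
    have huv' : (u : 𝓞 K) * ((a : ℤ) : 𝓞 K) + v * ((b : ℤ) : 𝓞 K) = 1 := by
      exact_mod_cast congrArg (Int.cast : ℤ → 𝓞 K) huv
    obtain ⟨x, y, hxy⟩ := aux_key m hm hsf K hdeg α hα hodd _ (a : ℤ) (by omega)
      (aux_ideal_sq ((a : ℤ) : 𝓞 K) θ u 0 (-((b : ℤ) : 𝓞 K))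
        (by rw [hθ, hm']; push_cast; ring) ⟨-v, by linear_combination huv'⟩)
    have hax : (a : ℤ) ∣ x := by
      have hsa : Squarefree (a : ℤ) := Int.squarefree_natCast.mpr (hsfn.of_mul_left)
      rw [← hsa.dvd_pow_iff_dvd (n := 2) (by norm_num)]
      exact ⟨4 - b * y ^ 2, by rw [hm'] at hxy; linear_combination hxy⟩
    obtain ⟨z, rfl⟩ := hax
    have hA : (2 : ℤ) ≤ a := by omega
    have hB : (2 : ℤ) ≤ b := by omega
    have e : (a : ℤ) * z ^ 2 + b * y ^ 2 = 4 := by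
      have : (a : ℤ) * (a * z ^ 2 + b * y ^ 2) = a * 4 := by
        rw [hm'] at hxy; linear_combination hxy
      exact mul_left_cancel₀ (by omega) this
    have hsa : Squarefree (a : ℤ) := Int.squarefree_natCast.mpr (hsfn.of_mul_left)
    have hsb : Squarefree (b : ℤ) := Int.squarefree_natCast.mpr (hsfn.of_mul_right)
    have key : ∀ c t : ℤ, 2 ≤ c → Squarefree c → c * t ^ 2 = 4 → False := by
      intro c t hc hsc h
      have : t ^ 2 ≤ 2 := by nlinarith [sq_nonneg t]
      have h1 : t ≤ 1 := by nlinarith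
      have h2 : -1 ≤ t := by nlinarith
      have h4 : c = 4 := by interval_cases t <;> omega
      subst h4
      have := hsc 2 (by norm_num)
      rw [Int.isUnit_iff] at this
      omega
    by_cases hz : z = 0
    · subst hz; exact key b y hB hsb (by linear_combination e)
    by_cases hy : y = 0
    · subst hy; exact key a z hA hsa (by linear_combination e)
    have hz1 : 1 ≤ z ^ 2 := by have := sq_pos_of_ne_zero hz; omega
    have hy1 : 1 ≤ y ^ 2 := by have := sq_pos_of_ne_zero hy; omega
    have hab : (a : ℤ) = 2 ∧ (b : ℤ) = 2 := by constructor <;> nlinarith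
    rw [hab.1, hab.2] at huv
    omega
  refine ⟨hp, ?_, hmn⟩
  have hp2 : m.natAbs ≠ 2 := by omega
  have ho := hp.eq_two_or_odd.resolve_left hp2
  by_contra h3
  obtain ⟨k, hk⟩ : ∃ k : ℤ, m = -(4 * k + 1) := ⟨(m.natAbs : ℤ) / 4, by omega⟩
  have hk1 : 1 ≤ k := by omega
  obtain ⟨x, y, hxy⟩ := aux_key m hm hsf K hdeg α hα hodd _ (2 : ℤ) (by omega)
    (aux_ideal_sq ((2 : ℤ) : 𝓞 K) (1 + θ) (-k) 1 (θ - 2 * k)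
      (by have : (m : 𝓞 K) = -(4 * k + 1) := by rw [hk]; push_cast; ring
          push_cast
          linear_combination hθ + this) ⟨-1, by push_cast; ring⟩)
  rw [hk] at hxy
  have hy : y ^ 2 ≤ 1 := by nlinarith [sq_nonneg x, sq_nonneg y]
  have hy1 : y ≤ 1 := by nlinarith
  have hy2 : -1 ≤ y := by nlinarith
  have hx1 : x ≤ 2 := by nlinarith [sq_nonneg y]
  have hx2 : -2 ≤ x := by nlinarith [sq_nonneg y]
  interval_cases y <;> interval_cases x <;> omega
end

section
/- For every prime p, the class number of the real quadratic field ℚ(√p) is odd. -/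
open NumberField

lemma coprime_split (p : ℕ) (hp : p.Prime) (u v w : ℤ) (hu : 0 < u) (hv : 0 < v)
    (hc : IsCoprime u v) (h : u * v = p * w ^ 2) :
    (∃ a b : ℤ, u = a ^ 2 ∧ v = p * b ^ 2) ∨ (∃ a b : ℤ, v = a ^ 2 ∧ u = p * b ^ 2) := by
  have key : ∀ u v : ℤ, 0 < u → 0 < v → IsCoprime u v → u * v = p * w ^ 2 → (p : ℤ) ∣ v →
      ∃ a b : ℤ, u = a ^ 2 ∧ v = p * b ^ 2 := by
    intro u v hu hv hc h hd
    obtain ⟨v', rfl⟩ := hd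
    have hp0 : (0 : ℤ) < p := by exact_mod_cast hp.pos
    have hv' : 0 < v' := by
      by_contra hh
      push Not at hh
      nlinarith
    have h1 : u * v' = w ^ 2 := by
      have : (p : ℤ) * (u * v') = p * w ^ 2 := by rw [← h]; ring
      exact mul_left_cancel₀ hp0.ne' this
    have hc' : IsCoprime u v' := hc.of_mul_right_right
    obtain ⟨a, ha⟩ := Int.sq_of_isCoprime hc' h1
    obtain ⟨b, hb⟩ := Int.sq_of_isCoprime hc'.symm (by rw [mul_comm]; exact h1)
    refine ⟨a, b, ?_, ?_⟩
    · rcases ha with ha | ha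
      · exact ha
      · nlinarith [sq_nonneg a]
    · rcases hb with hb | hb
      · rw [hb]
      · nlinarith [sq_nonneg b]
  have hd : (p : ℤ) ∣ u * v := ⟨_, h⟩
  rcases (Nat.prime_iff_prime_int.mp hp).dvd_or_dvd hd with hd | hd
  · right
    exact key v u hv hu hc.symm (by rw [mul_comm]; exact h) hd
  · left
    exact key u v hu hv hc h hd

lemma pell_odd (p : ℕ) (hp : p.Prime) (hodd : p % 2 = 1) :
    (∃ a b : ℤ, a ^ 2 - p * b ^ 2 = -1) ∨
      (p % 4 = 3 ∧ ∃ a b : ℤ, a ^ 2 - p * b ^ 2 = 2 ∨ a ^ 2 - p * b ^ 2 = -2) := by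
  have hns : ¬ IsSquare (p : ℤ) := (Nat.prime_iff_prime_int.mp hp).irreducible.not_isSquare
  obtain ⟨s, hs1, hs2, hs3⟩ :=
    Pell.IsFundamental.exists_of_not_isSquare (by exact_mod_cast hp.pos : (0 : ℤ) < p) hns
  have hprop := s.prop
  have hmin : ∀ a b : ℤ, a ^ 2 - p * b ^ 2 = 1 → 1 < a → s.x ≤ a := by
    intro a b hab ha
    exact @hs3 (Pell.Solution₁.mk a b hab) (by simpa using ha)
  clear hs3
  generalize s.x = x at *
  generalize s.y = y at *
  have hp2 : (p : ℤ) % 2 = 1 := by omega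
  rcases Int.even_or_odd' x with ⟨k, hk | hk⟩
  · right
    have h4 : p % 4 = 3 := by
      have h1 : (p * y ^ 2 : ℤ) % 4 = 3 := by
        have : (p * y ^ 2 : ℤ) = 4 * (k ^ 2 - 1) + 3 := by subst hk; linarith
        omega
      have hy : y % 4 = 0 ∨ y % 4 = 1 ∨ y % 4 = 2 ∨ y % 4 = 3 := by omega
      have h2 : y ^ 2 % 4 = 0 ∨ y ^ 2 % 4 = 1 := by
        rcases hy with hy | hy | hy | hy <;> simp [pow_two, Int.mul_emod, hy]
      rcases h2 with h2 | h2 <;> rw [Int.mul_emod, h2] at h1 <;> omega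
    refine ⟨h4, ?_⟩
    have hc : IsCoprime (x - 1) (x + 1) := ⟨k, -(k - 1), by subst hk; ring⟩
    have := coprime_split p hp (x - 1) (x + 1) y (by omega) (by omega) hc (by linarith)
    rcases this with ⟨a, b, h1, h2⟩ | ⟨a, b, h1, h2⟩
    · exact ⟨a, b, Or.inr (by linarith)⟩
    · exact ⟨a, b, Or.inl (by linarith)⟩
  · left
    have hy : Even y := by
      have : Even (p * y ^ 2 : ℤ) := ⟨2 * k * (k + 1), by subst hk; linarith⟩
      rw [Int.even_mul, Int.even_pow] at this
      rcases this with h | h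
      · rw [Int.even_iff] at h; omega
      · exact h.1
    obtain ⟨w, hw⟩ := hy
    have h1 : k * (k + 1) = p * w ^ 2 := by subst hk hw; nlinarith
    have hc : IsCoprime k (k + 1) := ⟨-1, 1, by ring⟩
    have := coprime_split p hp k (k + 1) w (by omega) (by omega) hc h1
    rcases this with ⟨a, b, h1, h2⟩ | ⟨a, b, h1, h2⟩
    · exact ⟨a, b, by linarith⟩
    · exfalso
      have ha : 1 < |a| := by
        rw [← sq_abs] at h1
        by_contra hh
        have := abs_nonneg a
        push Not at hh
        nlinarith
      have := hmin |a| b (by rw [sq_abs]; linarith) ha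
      rw [← sq_abs] at h1
      nlinarith

lemma pell_cases (p : ℕ) (hp : p.Prime) :
    (p % 4 ≠ 3 ∧ ∃ a b : ℤ, a ^ 2 - p * b ^ 2 = -1) ∨
      (p % 4 = 3 ∧ ∃ a b : ℤ, a ^ 2 - p * b ^ 2 = 2 ∨ a ^ 2 - p * b ^ 2 = -2) := by
  rcases hp.eq_two_or_odd with rfl | hodd
  · left
    exact ⟨by norm_num, 1, 1, by norm_num⟩
  · rcases pell_odd p hp hodd with ⟨a, b, h⟩ | h
    · left
      refine ⟨?_, a, b, h⟩
      intro h4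
      have hsq : ∀ y : ℤ, y ^ 2 % 4 = 0 ∨ y ^ 2 % 4 = 1 := by
        intro y
        have hy : y % 4 = 0 ∨ y % 4 = 1 ∨ y % 4 = 2 ∨ y % 4 = 3 := by omega
        rcases hy with hy | hy | hy | hy <;> simp [pow_two, Int.mul_emod, hy]
      have hp4 : (p : ℤ) % 4 = 3 := by omega
      have e : (p * b ^ 2 : ℤ) % 4 = (3 * (b ^ 2 % 4)) % 4 := by rw [Int.mul_emod, hp4]
      have := hsq a
      have := hsq b
      omega
    · exact Or.inr h

lemma no_neg_norm (p : ℕ) (hp : p.Prime) (h4 : p % 4 = 3) (t m v : ℤ)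
    (h : t ^ 2 + m ^ 2 = p * v ^ 2) : v = 0 := by
  by_contra hv
  have h1 : p * v.natAbs ^ 2 = t.natAbs ^ 2 + m.natAbs ^ 2 := by
    zify; simp only [sq_abs]; exact h.symm
  have h2 := Nat.eq_sq_add_sq_iff.mp ⟨_, _, h1⟩
  have hv' : v.natAbs ≠ 0 := by omega
  have := Fact.mk hp
  have h3 := @h2 p (by simp [hp, hp.ne_zero, hv]) h4
  rw [padicValNat.mul hp.ne_zero (by positivity), padicValNat.pow, padicValNat_self] at h3
  rw [Nat.even_iff] at h3
  omega

structure QData (p : ℕ) {O : Type*} [CommRing O] [IsDedekindDomain O] [Module.Free ℤ O]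
    (s : O ≃+* O) (a : O) : Prop where
  invol : ∀ x, s (s x) = x
  ha : a ^ 2 = (p : O)
  hs : s a = - a
  fix : ∀ x, s x = x → ∃ n : ℤ, x = (n : O)
  half : p % 4 = 1 → ∃ w : O, 2 * w = 1 + a
  norm_nat : ∀ n : ℕ, Ideal.absNorm (Ideal.span {(n : O)}) = n ^ 2

section
set_option linter.unusedSectionVars false
variable {p : ℕ} {O : Type*} [CommRing O] [IsDedekindDomain O] [Module.Free ℤ O]
  [Module.Finite ℤ O] [CharZero O] {s : O ≃+* O} {a : O}

lemma absNorm_map_equiv (s : O ≃+* O) (I : Ideal O) :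
    Ideal.absNorm (Ideal.map s I) = Ideal.absNorm I := by
  rw [Ideal.absNorm_apply, Ideal.absNorm_apply, Submodule.cardQuot_apply, Submodule.cardQuot_apply]
  exact (Nat.card_congr (Ideal.quotientEquiv I (Ideal.map s I) s rfl).toEquiv).symm

lemma map_span_one (s : O ≃+* O) (x : O) :
    Ideal.map s (Ideal.span {x}) = Ideal.span {s x} := by
  rw [Ideal.map_span, Set.image_singleton]

lemma QData.map_map (h : QData p s a) (I : Ideal O) : Ideal.map s (Ideal.map s I) = I := by
  ext x
  rw [Ideal.mem_map_of_equiv]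
  constructor
  · rintro ⟨y, hy, rfl⟩
    rw [Ideal.mem_map_of_equiv] at hy
    obtain ⟨z, hz, rfl⟩ := hy
    rwa [h.invol]
  · intro hx
    exact ⟨s x, Ideal.mem_map_of_mem s hx, h.invol x⟩

lemma QData.mem_map_iff (h : QData p s a) (I : Ideal O) (x : O) :
    x ∈ Ideal.map s I ↔ s x ∈ I := by
  constructor
  · intro hx
    have := Ideal.mem_map_of_mem s hx
    rwa [h.map_map] at this
  · intro hx
    have := Ideal.mem_map_of_mem s hx
    rwa [h.invol] at this

lemma exists_prime_mem (P : Ideal O) (hP : P.IsPrime) (h0 : P ≠ ⊥) :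
    ∃ q : ℕ, q.Prime ∧ (q : O) ∈ P := by
  have key : ∀ n : ℕ, n ≠ 0 → (n : O) ∈ P → ∃ q : ℕ, q.Prime ∧ (q : O) ∈ P := by
    intro n
    induction n using Nat.strong_induction_on with
    | _ n ih =>
      intro hn hm
      have h1 : n ≠ 1 := by
        rintro rfl
        exact hP.ne_top ((Ideal.eq_top_iff_one P).mpr (by simpa using hm))
      obtain ⟨m, hm'⟩ := n.minFac_dvd
      have hpr := Nat.minFac_prime h1
      have hm0 : m ≠ 0 := by
        rintro rfl
        simp at hm'
        exact hn hm'
      rw [hm', Nat.cast_mul] at hm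
      rcases hP.mem_or_mem hm with hh | hh
      · exact ⟨_, hpr, hh⟩
      · refine ih m ?_ hm0 hh
        have := hpr.two_le
        have : 0 < m := Nat.pos_of_ne_zero hm0
        nlinarith
  exact key _ (by rwa [Ne, Ideal.absNorm_eq_zero_iff]) (Ideal.absNorm_mem P)

lemma QData.absNorm_prime (h : QData p s a) (P : Ideal O) (hP : P.IsPrime) (q : ℕ) (hq : q.Prime)
    (hqP : (q : O) ∈ P) : Ideal.absNorm P = q ∨ P = Ideal.span {(q : O)} := by
  have hd : P ∣ Ideal.span {(q : O)} := by
    rwa [Ideal.dvd_span_singleton]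
  obtain ⟨C, hC⟩ := hd
  have hN := congrArg Ideal.absNorm hC
  rw [h.norm_nat, map_mul] at hN
  have h1 : Ideal.absNorm P ≠ 1 := by
    rw [Ne, Ideal.absNorm_eq_one_iff]; exact hP.ne_top
  have h2 : Ideal.absNorm P ∣ q ^ 2 := ⟨_, hN⟩
  obtain ⟨k, hk, hk'⟩ := (Nat.dvd_prime_pow hq).mp h2
  interval_cases k
  · simp at hk'; exact absurd hk' (by rw [← Ideal.absNorm_eq_one_iff] at *; exact h1)
  · left; simpa using hk'
  · right
    rw [hk'] at hN
    have : Ideal.absNorm C = 1 := by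
      have h3 : 0 < q ^ 2 := pow_pos hq.pos 2
      nlinarith
    rw [Ideal.absNorm_eq_one_iff] at this
    rw [hC, this, Ideal.mul_top]

/-- nonstable primes -/
lemma QData.mul_map_nonstable (h : QData p s a) (P : Ideal O) (hP : P.IsPrime) (h0 : P ≠ ⊥)
    (hns : Ideal.map s P ≠ P) : ∃ q : ℕ, P * Ideal.map s P = Ideal.span {(q : O)} := by
  obtain ⟨q, hq, hqP⟩ := exists_prime_mem P hP h0
  refine ⟨q, ?_⟩
  rcases h.absNorm_prime P hP q hq hqP with hN | hN
  · have hP' : (Ideal.map s P).IsPrime := Ideal.map_isPrime_of_equiv s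
    have hPm := hP.isMaximal h0
    have h0' : Ideal.map s P ≠ ⊥ := by
      intro hb
      apply h0
      rw [← h.map_map P, hb, Ideal.map_bot]
    have hPm' := hP'.isMaximal h0'
    have hcop : IsCoprime P (Ideal.map s P) :=
      (Ideal.isCoprime_iff_sup_eq).mpr (hPm.coprime_of_ne hPm' (Ne.symm hns))
    have hd : P * Ideal.map s P ∣ Ideal.span {(q : O)} := by
      apply hcop.mul_dvd
      · rwa [Ideal.dvd_span_singleton]
      · rw [Ideal.dvd_span_singleton, h.mem_map_iff, map_natCast]; exact hqP
    obtain ⟨C, hC⟩ := hd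
    have hN' := congrArg Ideal.absNorm hC
    rw [h.norm_nat, map_mul, map_mul, absNorm_map_equiv, hN] at hN'
    have : Ideal.absNorm C = 1 := by
      have h3 : 0 < q ^ 2 := pow_pos hq.pos 2
      nlinarith
    rw [Ideal.absNorm_eq_one_iff] at this
    rw [hC, this, Ideal.mul_top]
  · exfalso
    apply hns
    rw [hN, map_span_one, map_natCast]

lemma QData.trivial_action (h : QData p s a) (P : Ideal O) (hst : Ideal.map s P = P) (q : ℕ)
    (hq : q.Prime) (hN : Ideal.absNorm P = q) (x : O) : s x - x ∈ P := by
  have hfin : Nat.card (O ⧸ P) = q := by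
    rw [← hN, Ideal.absNorm_apply, Submodule.cardQuot_apply]
  have : Fact q.Prime := ⟨hq⟩
  have hne : (1 : O ⧸ P) ≠ 0 := by
    intro h1
    have hs : Subsingleton (O ⧸ P) := subsingleton_of_zero_eq_one h1.symm
    rw [Nat.card_of_subsingleton (1 : O ⧸ P)] at hfin
    exact hq.one_lt.ne hfin
  have hz : (Ideal.Quotient.mk P x) ∈ AddSubgroup.zmultiples (1 : O ⧸ P) :=
    mem_zmultiples_of_prime_card hfin hne
  obtain ⟨n, hn⟩ := AddSubgroup.mem_zmultiples_iff.mp hz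
  have hx : x - (n : O) ∈ P := by
    rw [← Ideal.Quotient.eq, ← hn]
    simp
  have hsx : s x - (n : O) ∈ P := by
    rw [← hst, h.mem_map_iff, map_sub, h.invol, map_intCast]
    exact hx
  have := P.sub_mem hsx hx
  simpa using this

lemma QData.sq_stable (h : QData p s a) (P : Ideal O) (hP : P.IsPrime)
    (hst : Ideal.map s P = P) (q : ℕ)
    (hq : q.Prime) (hqP : (q : O) ∈ P) (hN : Ideal.absNorm P = q) :
    P ^ 2 = Ideal.span {(q : O)} := by
  have hd : P ∣ Ideal.span {(q : O)} := by
    rwa [Ideal.dvd_span_singleton]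
  obtain ⟨C, hC⟩ := hd
  have hN' := congrArg Ideal.absNorm hC
  rw [h.norm_nat, map_mul, hN] at hN'
  have hNC : Ideal.absNorm C = q := by
    rw [pow_two] at hN'
    exact (mul_left_cancel₀ hq.ne_zero hN').symm
  have hCp : C.IsPrime := Ideal.isPrime_of_irreducible_absNorm (by rw [hNC]; exact hq)
  have hP0 : P ≠ 0 := by
    rintro rfl
    rw [map_zero] at hN
    exact hq.ne_zero hN.symm
  have hC0 : C ≠ ⊥ := by
    rintro rfl
    simp at hNC
    exact hq.ne_zero hNC.symm
  have hCst : Ideal.map s C = C := by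
    have h1 := congrArg (Ideal.map s) hC
    rw [map_span_one, map_natCast, Ideal.map_mul, hst, hC] at h1
    exact (mul_left_cancel₀ hP0 h1).symm
  have hle : P ≤ C := by
    intro x hx
    obtain ⟨n, hn⟩ := h.fix (x * s x) (by rw [map_mul, h.invol, mul_comm])
    have hnP : (n : O) ∈ P := by rw [← hn]; exact P.mul_mem_right _ hx
    have hqn : (q : ℤ) ∣ n := by
      by_contra hnd
      have hc : IsCoprime (q : ℤ) n :=
        (Nat.prime_iff_prime_int.mp hq).coprime_iff_not_dvd.mpr hnd
      obtain ⟨u, v, huv⟩ := hc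
      apply hP.ne_top
      rw [Ideal.eq_top_iff_one]
      have := P.add_mem (P.mul_mem_left (u : O) hqP) (P.mul_mem_left (v : O) hnP)
      have e : (u : O) * (q : O) + (v : O) * (n : O) = 1 := by exact_mod_cast huv
      rwa [e] at this
    have hqC : (q : O) ∈ C := by
      have : Ideal.span {(q : O)} ≤ C := by rw [hC]; exact Ideal.mul_le_right (I := P) (J := C)
      exact this (Ideal.mem_span_singleton_self _)
    have hxC : x * s x ∈ C := by
      rw [hn]
      obtain ⟨m, rfl⟩ := hqn
      push_cast
      exact C.mul_mem_right _ hqC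
    rcases hCp.mem_or_mem hxC with hh | hh
    · exact hh
    · rw [← hCst, h.mem_map_iff]; exact hh
  have hPm := hP.isMaximal hP0
  have : P = C := hPm.eq_of_le hCp.ne_top hle
  rw [hC, ← this, pow_two]

lemma ideal_sq_inj {P J : Ideal O} (hP : P.IsPrime) (hP0 : P ≠ ⊥) (h : P ^ 2 = J ^ 2) :
    P = J := by
  have hpr : Prime P := Ideal.prime_of_isPrime hP0 hP
  have h1 : P ∣ J := hpr.dvd_of_dvd_pow (n := 2) (by rw [← h]; exact dvd_pow_self P two_ne_zero)
  obtain ⟨D, hD⟩ := h1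
  rw [hD, mul_pow] at h
  have h2 : (D : Ideal O) ^ 2 = 1 := by
    have h3 : P ^ 2 * 1 = P ^ 2 * D ^ 2 := by rw [mul_one]; exact h
    exact (mul_left_cancel₀ (pow_ne_zero 2 hpr.ne_zero) h3).symm
  have h4 : IsUnit D := IsUnit.of_pow_eq_one h2 two_ne_zero
  rw [Ideal.isUnit_iff] at h4
  rw [hD, h4, Ideal.mul_top]

lemma nat_prime_eq (P : Ideal O) (hP : P.IsPrime) {q r : ℕ} (hq : q.Prime) (hr : r.Prime)
    (hqP : (q : O) ∈ P) (hrP : (r : O) ∈ P) : q = r := by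
  by_contra hne
  have hc : IsCoprime (q : ℤ) r := by
    rw [Nat.isCoprime_iff_coprime]; exact (Nat.coprime_primes hq hr).mpr hne
  obtain ⟨u, v, huv⟩ := hc
  apply hP.ne_top
  rw [Ideal.eq_top_iff_one]
  have := P.add_mem (P.mul_mem_left (u : O) hqP) (P.mul_mem_left (v : O) hrP)
  have e : (u : O) * (q : O) + (v : O) * (r : O) = 1 := by exact_mod_cast huv
  rwa [e] at this

lemma QData.stable_principal (h : QData p s a) (hp : p.Prime) (P : Ideal O) (hP : P.IsPrime)
    (h0 : P ≠ ⊥) (hst : Ideal.map s P = P) : ∃ x : O, P = Ideal.span {x} := by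
  obtain ⟨q, hq, hqP⟩ := exists_prime_mem P hP h0
  rcases h.absNorm_prime P hP q hq hqP with hN | hN
  swap
  · exact ⟨_, hN⟩
  have hsq := h.sq_stable P hP hst q hq hqP hN
  have hact := h.trivial_action P hst q hq hN
  have hpa : a ∈ P → ∃ x : O, P = Ideal.span {x} := by
    intro haP
    have hpP : (p : O) ∈ P := by rw [← h.ha, pow_two]; exact P.mul_mem_left _ haP
    have hqp := nat_prime_eq P hP hq hp hqP hpP
    refine ⟨a, ideal_sq_inj hP h0 ?_⟩
    rw [hsq, Ideal.span_singleton_pow, h.ha, hqp]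
  by_cases haP : a ∈ P
  · exact hpa haP
  have h2P : (2 : O) ∈ P := by
    have := hact a
    rw [h.hs, show -a - a = -(2 * a) by ring, P.neg_mem_iff] at this
    exact (hP.mem_or_mem this).resolve_right haP
  have hq2 : q = 2 := nat_prime_eq P hP hq Nat.prime_two hqP (by exact_mod_cast h2P)
  subst hq2
  rcases pell_cases p hp with ⟨h4, -⟩ | ⟨h4, c, b, hcb⟩
  · exfalso
    rcases hp.eq_two_or_odd with rfl | hodd
    · apply haP
      apply hP.mem_of_pow_mem 2
      rw [h.ha]
      exact hqP
    · obtain ⟨w, hw⟩ := h.half (by omega)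
      have h2 : (2 : O) ≠ 0 := two_ne_zero
      have e : s w - w = - a := by
        apply mul_left_cancel₀ h2
        have : s (2 * w) = s (1 + a) := by rw [hw]
        rw [map_mul, map_add, map_one, h.hs, map_ofNat] at this
        rw [mul_sub, this, hw]; ring
      have := hact w
      rw [e, P.neg_mem_iff] at this
      exact haP this
  · -- the generator of the prime above two
    have hN2 : (c : O) ^ 2 - p * (b : O) ^ 2 = 2 ∨ (c : O) ^ 2 - p * (b : O) ^ 2 = -2 := by
      rcases hcb with hcb | hcb
      · left; exact_mod_cast hcb
      · right; exact_mod_cast hcb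
    refine ⟨c + b * a, ideal_sq_inj hP h0 ?_⟩
    rw [hsq, Ideal.span_singleton_pow]
    have hdiv : c + b * a ∣ (2 : O) := by
      rcases hN2 with hh | hh
      · exact ⟨c - b * a, by rw [← hh, ← h.ha]; ring⟩
      · refine ⟨-(c - b * a), ?_⟩
        have : (2 : O) = -((c : O) ^ 2 - p * (b : O) ^ 2) := by rw [hh]; ring
        rw [this, ← h.ha]; ring
    apply le_antisymm
    · rw [Ideal.span_singleton_le_span_singleton]
      obtain ⟨t, ht⟩ := hdiv
      -- 2 = ± (c+ba)(c-ba), c - ba = (c + ba) - 2ba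
      have e : (c - b * a : O) = (c + b * a) * (1 - t * (b * a)) := by
        rw [mul_sub, ← mul_assoc, ← ht]; ring
      have h3 : (c + b * a : O) ^ 2 ∣ (c : O) ^ 2 - p * (b : O) ^ 2 := by
        rw [← h.ha, show (c : O) ^ 2 - a ^ 2 * (b : O) ^ 2 = (c + b * a) * (c - b * a) by ring, e]
        exact ⟨1 - t * (b * a), by ring⟩
      rcases hN2 with hh | hh
      · rw [hh] at h3; exact_mod_cast h3
      · rw [hh, dvd_neg] at h3; exact_mod_cast h3
    · rw [Ideal.span_singleton_le_span_singleton]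
      obtain ⟨m, hm⟩ : ∃ m : ℤ, c ^ 2 + p * b ^ 2 = 2 * m := by
        rcases hcb with hcb | hcb
        · exact ⟨1 + p * b ^ 2, by linarith⟩
        · exact ⟨-1 + p * b ^ 2, by linarith⟩
      have hm' : (c : O) ^ 2 + p * (b : O) ^ 2 = 2 * m := by exact_mod_cast hm
      refine ⟨m + c * b * a, ?_⟩
      push_cast
      rw [mul_add, ← hm', ← h.ha]
      ring

lemma QData.pair_principal (h : QData p s a) (hp : p.Prime) (I : Ideal O) (hI : I ≠ 0) :
    ∃ x : O, x ≠ 0 ∧ I * Ideal.map s I = Ideal.span {x} := by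
  have key : ∃ x : O, I * Ideal.map s I = Ideal.span {x} := by
    induction I using UniqueFactorizationMonoid.induction_on_prime with
    | h₁ => exact absurd rfl hI
    | h₂ J hJ =>
      rw [Ideal.isUnit_iff] at hJ
      subst hJ
      exact ⟨1, by rw [Ideal.map_top, Ideal.top_mul, Ideal.span_singleton_one]⟩
    | h₃ J P hJ hP ih =>
      obtain ⟨x, hx⟩ := ih hJ
      have hPp := Ideal.isPrime_of_prime hP
      have : ∃ y : O, P * Ideal.map s P = Ideal.span {y} := by
        by_cases hst : Ideal.map s P = P
        · obtain ⟨y, hy⟩ := h.stable_principal hp P hPp hP.ne_zero hst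
          exact ⟨y * y, by rw [hst, hy, Ideal.span_singleton_mul_span_singleton]⟩
        · obtain ⟨q, hq⟩ := h.mul_map_nonstable P hPp hP.ne_zero hst
          exact ⟨q, hq⟩
      obtain ⟨y, hy⟩ := this
      refine ⟨y * x, ?_⟩
      rw [Ideal.map_mul, ← Ideal.span_singleton_mul_span_singleton, ← hx, ← hy]
      ring
  obtain ⟨x, hx⟩ := key
  refine ⟨x, ?_, hx⟩
  rintro rfl
  rw [Ideal.span_singleton_eq_bot.mpr rfl, Ideal.mul_eq_bot] at hx
  rcases hx with hx | hx
  · exact hI hx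
  · apply hI
    rw [← h.map_map I, hx, Ideal.map_bot]; rfl

lemma QData.ambiguous_principal (h : QData p s a) (hp : p.Prime) (J : Ideal O) (hJ : J ≠ 0)
    (hst : Ideal.map s J = J) : ∃ x : O, J = Ideal.span {x} := by
  induction hn : Ideal.absNorm J using Nat.strong_induction_on generalizing J with
  | _ n ih =>
    by_cases hT : J = ⊤
    · exact ⟨1, by rw [hT, Ideal.span_singleton_one]⟩
    obtain ⟨P, hPm, hle⟩ := Ideal.exists_le_maximal J hT
    have hP := hPm.isPrime
    have h0 : P ≠ ⊥ := by
      rintro rfl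
      exact hJ (le_bot_iff.mp hle)
    have step : ∀ C : Ideal O, Ideal.map s C = C → C ≠ ⊤ → C ∣ J → (∃ y : O, C = Ideal.span {y}) →
        ∃ x : O, J = Ideal.span {x} := by
      rintro C hC hCT ⟨D, hD⟩ ⟨y, hy⟩
      have hC0 : C ≠ 0 := by rintro rfl; exact hJ (by rw [hD, zero_mul])
      have hD0 : D ≠ 0 := by rintro rfl; exact hJ (by rw [hD, mul_zero])
      have hDs : Ideal.map s D = D := by
        have h1 := hst
        rw [hD, Ideal.map_mul, hC] at h1
        exact mul_left_cancel₀ hC0 h1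
      have hlt : Ideal.absNorm D < n := by
        rw [← hn, hD, map_mul]
        have h1 : Ideal.absNorm C ≠ 1 := by rwa [Ne, Ideal.absNorm_eq_one_iff]
        have h2 : Ideal.absNorm C ≠ 0 := by rwa [Ne, Ideal.absNorm_eq_zero_iff]
        have h3 : Ideal.absNorm D ≠ 0 := by rwa [Ne, Ideal.absNorm_eq_zero_iff]
        have h4 : 2 ≤ Ideal.absNorm C := by omega
        have h5 : 0 < Ideal.absNorm D := by omega
        nlinarith
      obtain ⟨x, hx⟩ := ih _ hlt D hD0 hDs rfl
      exact ⟨y * x, by rw [hD, hy, hx, Ideal.span_singleton_mul_span_singleton]⟩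
    by_cases hPs : Ideal.map s P = P
    · exact step P hPs hP.ne_top (Ideal.dvd_iff_le.mpr hle) (h.stable_principal hp P hP h0 hPs)
    · obtain ⟨q, hq⟩ := h.mul_map_nonstable P hP h0 hPs
      refine step (P * Ideal.map s P) ?_ ?_ ?_ ⟨_, hq⟩
      · rw [Ideal.map_mul, h.map_map, mul_comm]
      · intro ht
        apply hP.ne_top
        rw [eq_top_iff, ← ht]
        exact Ideal.mul_le_left (I := P)
      · have hP' : (Ideal.map s P).IsPrime := Ideal.map_isPrime_of_equiv s
        have h0' : Ideal.map s P ≠ ⊥ := by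
          intro hb
          apply h0
          rw [← h.map_map P, hb, Ideal.map_bot]
        have hPm' := hP'.isMaximal h0'
        have hcop : IsCoprime P (Ideal.map s P) :=
          (Ideal.isCoprime_iff_sup_eq).mpr (hPm.coprime_of_ne hPm' (Ne.symm hPs))
        apply hcop.mul_dvd (Ideal.dvd_iff_le.mpr hle)
        rw [← hst]
        exact Ideal.dvd_iff_le.mpr (Ideal.map_mono hle)

/-- Hilbert 90 step. -/
lemma QData.of_norm_eq (h : QData p s a) (hp : p.Prime) (I : Ideal O) (hI : I ≠ 0) (x y : O)
    (hx : x ≠ 0) (hy : y ≠ 0) (hxy : Ideal.span {x} * Ideal.map s I = Ideal.span {y} * I)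
    (hn : x * s x = y * s y) : I.IsPrincipal := by
  have ha0 : a ≠ 0 := by
    intro h0
    have := h.ha
    rw [h0, zero_pow two_ne_zero] at this
    exact hp.ne_zero (by exact_mod_cast this.symm)
  obtain ⟨β, hβ, hβ'⟩ : ∃ β : O, β ≠ 0 ∧ y * s β = x * β := by
    by_cases hb : y + s x = 0
    · refine ⟨a * (y - s x), mul_ne_zero ha0 ?_, ?_⟩
      · have e2 : y - s x = 2 * y := by linear_combination -hb
        rw [e2]
        exact mul_ne_zero two_ne_zero hy
      · rw [map_mul, map_sub, h.invol, h.hs]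
        linear_combination a * hn
    · refine ⟨y + s x, hb, ?_⟩
      rw [map_add, h.invol]
      linear_combination -hn
  have hJ : Ideal.map s (Ideal.span {β} * I) = Ideal.span {β} * I := by
    have hy' : Ideal.span {y} ≠ (0 : Ideal O) := by
      rwa [Ne, Ideal.zero_eq_bot, Ideal.span_singleton_eq_bot]
    apply mul_left_cancel₀ hy'
    rw [Ideal.map_mul, map_span_one, ← mul_assoc, Ideal.span_singleton_mul_span_singleton, hβ',
      mul_comm x, ← Ideal.span_singleton_mul_span_singleton, mul_assoc, hxy, ← mul_assoc,
      ← mul_assoc, mul_comm (Ideal.span {β})]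
  have hβ0 : Ideal.span {β} ≠ (0 : Ideal O) := by
    rwa [Ne, Ideal.zero_eq_bot, Ideal.span_singleton_eq_bot]
  obtain ⟨z, hz⟩ := h.ambiguous_principal hp _ (mul_ne_zero hβ0 hI) hJ
  have hzm : z ∈ Ideal.span {β} * I := by rw [hz]; exact Ideal.mem_span_singleton_self z
  obtain ⟨w, rfl⟩ := Ideal.mem_span_singleton.mp (Ideal.mul_le_left (I := Ideal.span {β}) (J := I) hzm)
  rw [← Ideal.span_singleton_mul_span_singleton] at hz
  exact ⟨w, mul_left_cancel₀ hβ0 hz⟩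

lemma QData.absNorm_sq (h : QData p s a) (x : O) (n : ℤ) (hn : x * s x = n) :
    Ideal.absNorm (Ideal.span {x}) = n.natAbs := by
  have h1 : Ideal.absNorm (Ideal.span {(n : O)}) = n.natAbs ^ 2 := by
    rw [← h.norm_nat]
    congr 1
    rcases Int.natAbs_eq n with e | e
    · conv_lhs => rw [e]
      simp
    · conv_lhs => rw [e]
      simp [Ideal.span_singleton_neg]
  rw [← hn, ← Ideal.span_singleton_mul_span_singleton, map_mul, ← map_span_one,
    absNorm_map_equiv, ← pow_two] at h1
  exact Nat.pow_left_injective two_ne_zero h1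

lemma QData.main (h : QData p s a) (hp : p.Prime) (I : Ideal O) (hI : I ≠ 0)
    (hsq : (I ^ 2).IsPrincipal) : I.IsPrincipal := by
  obtain ⟨x, hx⟩ := hsq
  rw [← Ideal.span] at hx
  have hx0 : x ≠ 0 := by
    rintro rfl
    rw [Ideal.span_singleton_eq_bot.mpr rfl] at hx
    exact hI (pow_eq_zero_iff two_ne_zero |>.mp hx)
  obtain ⟨y, hy0, hy⟩ := h.pair_principal hp I hI
  have hxy : Ideal.span {x} * Ideal.map s I = Ideal.span {y} * I := by
    rw [← hx, ← hy]; ring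
  obtain ⟨n, hn⟩ := h.fix (x * s x) (by rw [map_mul, h.invol, mul_comm])
  obtain ⟨m, hm⟩ := h.fix (y * s y) (by rw [map_mul, h.invol, mul_comm])
  have hnm : n.natAbs = m.natAbs := by
    rw [← h.absNorm_sq x n hn, ← h.absNorm_sq y m hm]
    have hN := congrArg Ideal.absNorm hxy
    rw [map_mul, map_mul, absNorm_map_equiv] at hN
    exact mul_right_cancel₀ (by rwa [Ne, Ideal.absNorm_eq_zero_iff]) hN
  rcases Int.natAbs_eq_natAbs_iff.mp hnm with e | e
  · exact h.of_norm_eq hp I hI x y hx0 hy0 hxy (by rw [hn, hm, e])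
  rcases pell_cases p hp with ⟨-, c, b, hcb⟩ | ⟨h4, -⟩
  · -- a unit of norm -1
    have hcb' : (c : O) ^ 2 - p * (b : O) ^ 2 = -1 := by exact_mod_cast hcb
    set u : O := c + b * a with hu
    have hsu : s u = c - b * a := by
      rw [hu, map_add, map_mul, h.hs, map_intCast, map_intCast]; ring
    have hus : u * s u = -1 := by
      rw [hsu, hu, ← hcb', ← h.ha]; ring
    have hunit : IsUnit u := IsUnit.of_mul_eq_one (-s u) (by rw [mul_neg, hus, neg_neg])
    refine h.of_norm_eq hp I hI x (u * y) hx0 (mul_ne_zero hunit.ne_zero hy0) ?_ ?_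
    · rw [hxy, Ideal.span_singleton_mul_left_unit hunit]
    · rw [map_mul, hn, e]
      push_cast
      rw [← hm]
      linear_combination (-(y * s y)) * hus
  · exfalso
    have hm0 : m ≠ 0 := by
      rintro rfl
      rw [Int.cast_zero, mul_eq_zero] at hm
      rcases hm with hm | hm
      · exact hy0 hm
      · exact hy0 (by simpa using hm)
    set z := x * s y with hz
    have hsz : s z = s x * y := by rw [hz, map_mul, h.invol]
    have hzz : z * s z = -(m : O) ^ 2 := by
      rw [hsz, hz]
      have : x * s x * (y * s y) = (-m : O) * m := by rw [hn, hm, e]; push_cast; ring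
      linear_combination this
    obtain ⟨t, ht⟩ := h.fix (z + s z) (by rw [map_add, h.invol, add_comm])
    obtain ⟨v, hv⟩ := h.fix ((z - s z) * a) (by
      rw [map_mul, map_sub, h.invol, h.hs]; ring)
    have e1 : v ^ 2 = p * (t ^ 2 + (2 * m) ^ 2) := by
      have : (v : O) ^ 2 = p * ((t : O) ^ 2 + (2 * m) ^ 2) := by
        rw [← hv, ← ht, ← h.ha]
        linear_combination (-4 * a ^ 2) * hzz
      exact_mod_cast this
    have hpi := Nat.prime_iff_prime_int.mp hp
    obtain ⟨r, rfl⟩ := hpi.dvd_of_dvd_pow (Dvd.intro _ e1.symm)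
    have e2 : t ^ 2 + (2 * m) ^ 2 = p * r ^ 2 := by
      apply mul_left_cancel₀ hpi.ne_zero
      rw [← e1]; ring
    have hr := no_neg_norm p hp h4 _ _ _ e2
    subst hr
    have : 0 < m ^ 2 := by positivity
    nlinarith [sq_nonneg t]
end

lemma exists_qdata (p : ℕ) (hp : p.Prime) (K : Type) [Field K] [NumberField K]
    (hdeg : Module.finrank ℚ K = 2) (α : K) (hα : α ^ 2 = (p : K)) :
    ∃ (s : 𝓞 K ≃+* 𝓞 K) (a : 𝓞 K), QData p s a := by
  have hquad : Algebra.IsQuadraticExtension ℚ K := { finrank_eq_two' := hdeg }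
  have hgal : IsGalois ℚ K := inferInstance
  have hcard : Nat.card (K ≃ₐ[ℚ] K) = 2 := by rw [IsGalois.card_aut_eq_finrank, hdeg]
  have hαint : IsIntegral ℤ α := by
    have h1 : IsIntegral ℤ (α ^ 2) := by
      rw [hα]
      exact isIntegral_algebraMap (R := ℤ) (x := (p : ℤ)) |> fun h => by simpa using h
    exact IsIntegral.of_pow two_pos h1
  have hnot : ¬ ∃ r : ℚ, algebraMap ℚ K r = α := by
    rintro ⟨r, hr⟩
    have h1 : r ^ 2 = (p : ℚ) := by
      apply (algebraMap ℚ K).injective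
      rw [map_pow, hr, hα, map_natCast]
    have h2 : IsSquare (p : ℚ) := ⟨r, by rw [← h1, pow_two]⟩
    rw [Rat.isSquare_natCast_iff] at h2
    exact hp.prime.irreducible.not_isSquare h2
  obtain ⟨σ, hσ⟩ : ∃ σ : K ≃ₐ[ℚ] K, σ α ≠ α := by
    by_contra hh
    push Not at hh
    exact hnot ((IsGalois.mem_range_algebraMap_iff_fixed α).mpr hh)
  have hσα : σ α = -α := by
    have : (σ α) ^ 2 = α ^ 2 := by rw [← map_pow, hα, map_natCast]
    exact (sq_eq_sq_iff_eq_or_eq_neg.mp this).resolve_left hσ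
  have hσ1 : σ ≠ 1 := by
    rintro rfl
    exact hσ rfl
  have hinv : ∀ x, σ (σ x) = x := by
    intro x
    have : σ ^ 2 = 1 := by rw [← hcard]; exact pow_card_eq_one'
    have h2 := DFunLike.congr_fun this x
    rwa [pow_two] at h2
  have hfix : ∀ x : K, σ x = x → ∃ r : ℚ, algebraMap ℚ K r = x := by
    intro x hx
    apply (IsGalois.mem_range_algebraMap_iff_fixed x).mpr
    intro τ
    have : Fact (Nat.Prime 2) := ⟨Nat.prime_two⟩
    have hτ : τ ∈ Subgroup.zpowers σ := mem_zpowers_of_prime_card hcard hσ1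
    have hst : Subgroup.zpowers σ ≤ MulAction.stabilizer (K ≃ₐ[ℚ] K) x := by
      rw [Subgroup.zpowers_le]
      exact hx
    exact hst hτ
  have hcoe : ∀ x : 𝓞 K, ((RingOfIntegers.mapRingEquiv σ.toRingEquiv x : 𝓞 K) : K) = σ x := by
    intro x
    rfl
  obtain ⟨a, ha⟩ : ∃ a : 𝓞 K, (a : K) = α := ⟨⟨α, hαint⟩, rfl⟩
  have ha' : algebraMap (𝓞 K) K a = α := ha
  refine ⟨RingOfIntegers.mapRingEquiv σ.toRingEquiv, a, ?_⟩
  constructor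
  · intro x
    apply RingOfIntegers.ext
    rw [hcoe, hcoe, hinv]
  · apply RingOfIntegers.ext
    change algebraMap (𝓞 K) K (a ^ 2) = algebraMap (𝓞 K) K (p : 𝓞 K)
    rw [map_pow, ha', hα, map_natCast]
  · apply RingOfIntegers.ext
    rw [hcoe]
    change σ (algebraMap (𝓞 K) K a) = algebraMap (𝓞 K) K (-a)
    rw [map_neg, ha', hσα]
  · intro x hx
    have hx' : σ (x : K) = x := by rw [← hcoe, hx]
    obtain ⟨r, hr⟩ := hfix _ hx'
    have hi : IsIntegral ℤ r := by
      have := x.2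
      rw [← isIntegral_algebraMap_iff (algebraMap ℚ K).injective, hr]
      exact RingOfIntegers.isIntegral_coe x
    obtain ⟨n, hn⟩ := IsIntegrallyClosed.isIntegral_iff.mp hi
    refine ⟨n, RingOfIntegers.ext ?_⟩
    rw [← hr, ← hn]
    simp
  · intro h4
    obtain ⟨k, hk⟩ : ∃ k : ℕ, p = 4 * k + 1 := ⟨p / 4, by omega⟩
    have hwint : IsIntegral ℤ ((1 + α) / 2) := by
      refine ⟨Polynomial.X ^ 2 - Polynomial.X - Polynomial.C (k : ℤ), ?_, ?_⟩
      · monicity!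
      · simp only [Polynomial.eval₂_sub, Polynomial.eval₂_pow, Polynomial.eval₂_X,
          Polynomial.eval₂_C]
        rw [hk] at hα
        push_cast at hα
        simp only [algebraMap_int_eq, eq_intCast, Int.cast_natCast]
        linear_combination hα / 4
    obtain ⟨w, hw⟩ : ∃ w : 𝓞 K, (w : K) = (1 + α) / 2 := ⟨⟨_, hwint⟩, rfl⟩
    refine ⟨w, RingOfIntegers.ext ?_⟩
    have hw' : algebraMap (𝓞 K) K w = (1 + α) / 2 := hw
    change algebraMap (𝓞 K) K (2 * w) = algebraMap (𝓞 K) K (1 + a)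
    rw [map_mul, map_add, hw', ha', map_ofNat, map_one]
    field_simp
  · intro n
    rw [Ideal.absNorm_span_natCast, RingOfIntegers.rank, hdeg]

/-- For every prime `p`, the class number of the real quadratic field `ℚ(√p)`
(formalized as any degree-2 number field containing a square root of `p`) is odd. -/
theorem odd_classNumber_of_sqrt_prime
    (p : ℕ) (hp : p.Prime)
    (K : Type) [Field K] [NumberField K]
    (hdeg : Module.finrank ℚ K = 2)
    (α : K) (hα : α ^ 2 = (p : K)) :
    Odd (NumberField.classNumber K) := by
  obtain ⟨s, a, h⟩ := exists_qdata p hp K hdeg α hα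
  rw [← Nat.not_even_iff_odd]
  intro he
  have h2 : 2 ∣ Fintype.card (ClassGroup (𝓞 K)) := he.two_dvd
  have : Fact (Nat.Prime 2) := ⟨Nat.prime_two⟩
  obtain ⟨g, hg⟩ := exists_prime_orderOf_dvd_card 2 h2
  obtain ⟨⟨I, hI⟩, rfl⟩ := ClassGroup.mk0_surjective g
  have hI0 : I ≠ 0 := nonZeroDivisors.ne_zero hI
  have hsq : (I ^ 2).IsPrincipal := by
    rw [← ClassGroup.mk0_eq_one_iff (pow_mem hI 2)]
    have := pow_orderOf_eq_one (ClassGroup.mk0 ⟨I, hI⟩)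
    rwa [hg, ← map_pow, SubmonoidClass.mk_pow] at this
  have hpr := h.main hp I hI0 hsq
  rw [← ClassGroup.mk0_eq_one_iff hI] at hpr
  rw [hpr, orderOf_one] at hg
  omega
end

section
/- For distinct primes p and q with p ≡ 3 (mod 4) and q ≡ 3 (mod 4), the class number of the real quadratic field ℚ(√(pq)) is odd. -/
open NumberField

lemma no_neg_one {p q : ℕ} (hp : p.Prime) (hq : q.Prime) (hpq : p ≠ q) (hp4 : p % 4 = 3)
    (A B C : ℤ) (hC : C ≠ 0) (h : A ^ 2 + C ^ 2 = p * q * B ^ 2) : False := by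
  have hB : B ≠ 0 := by
    rintro rfl
    have : 0 < C ^ 2 := by positivity
    nlinarith [sq_nonneg A]
  have hn : p * q * B.natAbs ^ 2 = A.natAbs ^ 2 + C.natAbs ^ 2 := by
    zify
    simp only [sq_abs]
    exact h.symm
  have h1 := (Nat.eq_sq_add_sq_iff (n := p * q * B.natAbs ^ 2)).1 ⟨_, _, hn⟩ p
  have hB' : B.natAbs ≠ 0 := by simpa using hB
  have hne : p * q * B.natAbs ^ 2 ≠ 0 := by
    have := hp.ne_zero
    have := hq.ne_zero
    positivity
  have h2 := h1 (Nat.mem_primeFactors.2 ⟨hp, ⟨q * B.natAbs ^ 2, by ring⟩, hne⟩) hp4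
  have : Fact p.Prime := ⟨hp⟩
  have : Fact q.Prime := ⟨hq⟩
  rw [padicValNat.mul (mul_ne_zero hp.ne_zero hq.ne_zero) (pow_ne_zero _ hB'),
    padicValNat.mul hp.ne_zero hq.ne_zero, padicValNat.pow,
    padicValNat_self, padicValNat_primes hpq] at h2
  rw [Nat.even_iff] at h2
  omega

lemma nonneg_sq {a b c : ℤ} (h : IsCoprime a b) (ha : 0 ≤ a) (e : a * b = c ^ 2) :
    ∃ r, a = r ^ 2 := by
  obtain ⟨r, hr⟩ := Int.sq_of_isCoprime h e
  rcases hr with hr | hr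
  · exact ⟨r, hr⟩
  · exact ⟨0, by nlinarith [sq_nonneg r]⟩

lemma pell_consequence {p q : ℕ} (hp : p.Prime) (hq : q.Prime) (hpq : p ≠ q) (hp4 : p % 4 = 3)
    (hq4 : q % 4 = 3) : ∃ r s : ℤ, (p * r ^ 2 - q * s ^ 2) ^ 2 = 1 := by
  have hp0 : (0 : ℤ) < p := by exact_mod_cast hp.pos
  have hq0 : (0 : ℤ) < q := by exact_mod_cast hq.pos
  have hpp : Prime (p : ℤ) := Nat.prime_iff_prime_int.1 hp
  have hqp : Prime (q : ℤ) := Nat.prime_iff_prime_int.1 hq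
  have hcop : IsCoprime (p : ℤ) q := Nat.isCoprime_iff_coprime.2 ((Nat.coprime_primes hp hq).2 hpq)
  have hns : ¬ IsSquare ((p : ℤ) * q) := by
    rintro ⟨r, hr⟩
    have h1 : (p : ℤ) ∣ r := by
      have : (p : ℤ) ∣ r * r := ⟨q, hr.symm⟩
      rcases hpp.dvd_or_dvd this with h | h <;> exact h
    obtain ⟨t, rfl⟩ := h1
    have h2 : (q : ℤ) = p * (t * t) := by
      apply mul_left_cancel₀ hp0.ne'
      rw [hr]; ring
    have : (p : ℤ) ∣ q := ⟨_, h2⟩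
    exact hpp.not_isUnit (hcop.isUnit_of_dvd' dvd_rfl this)
  obtain ⟨a, ha⟩ := Pell.IsFundamental.exists_of_not_isSquare (mul_pos hp0 hq0) hns
  obtain ⟨hx, hy, hmin⟩ := ha
  have hprop := a.prop
  have hmin' : ∀ s r : ℤ, s ^ 2 - p * q * r ^ 2 = 1 → 1 < s → a.x ≤ s := fun s r h hs =>
    hmin (b := Pell.Solution₁.mk s r h) (by simpa using hs)
  generalize a.x = x at *
  generalize a.y = y at *
  have hd4 : ∃ k : ℤ, (p : ℤ) * q = 4 * k + 1 := by
    refine ⟨((p * q : ℕ) : ℤ) / 4, ?_⟩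
    have : (p * q) % 4 = 1 := by rw [Nat.mul_mod, hp4, hq4]
    push_cast at *
    have h : ((p : ℤ) * q) % 4 = 1 := by exact_mod_cast this
    omega
  obtain ⟨k, hk⟩ := hd4
  have hye : Even y := by
    by_contra hodd
    rw [Int.not_even_iff_odd] at hodd
    obtain ⟨m, rfl⟩ := hodd
    rw [hk] at hprop
    rcases Int.even_or_odd' x with ⟨c, rfl | rfl⟩ <;> ring_nf at hprop <;> omega
  obtain ⟨w, rfl⟩ := hye
  have hxo : Odd x := by
    by_contra he
    rw [Int.not_odd_iff_even] at he
    obtain ⟨c, rfl⟩ := he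
    have : (2 : ℤ) ∣ 1 := ⟨2 * c ^ 2 - p * q * 2 * w ^ 2, by rw [← hprop]; ring⟩
    omega
  obtain ⟨u, rfl⟩ := hxo
  have hu : 0 < u := by omega
  have key : u * (u + 1) = p * q * w ^ 2 := by
    have : 4 * (u * (u + 1)) = 4 * (p * q * w ^ 2) := by linear_combination hprop
    omega
  have hc : IsCoprime u (u + 1) := ⟨-1, 1, by ring⟩
  have hpd : (p : ℤ) ∣ u ∨ (p : ℤ) ∣ u + 1 :=
    hpp.dvd_or_dvd ⟨q * w ^ 2, by rw [key]; ring⟩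
  have hqd : (q : ℤ) ∣ u ∨ (q : ℤ) ∣ u + 1 :=
    hqp.dvd_or_dvd ⟨p * w ^ 2, by rw [key]; ring⟩
  rcases hpd with hpd | hpd <;> rcases hqd with hqd | hqd
  · obtain ⟨v, hv⟩ := hcop.mul_dvd hpd hqd
    have hv0 : 0 ≤ v := by nlinarith [mul_pos hp0 hq0]
    have e : v * (u + 1) = w ^ 2 := by
      apply mul_left_cancel₀ (mul_pos hp0 hq0).ne'
      rw [← key]; nth_rewrite 2 [hv]; ring
    have hc' : IsCoprime v (u + 1) := hc.of_isCoprime_of_dvd_left ⟨p * q, by rw [hv]; ring⟩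
    obtain ⟨r, hr⟩ := nonneg_sq hc' hv0 e
    obtain ⟨s, hs⟩ := nonneg_sq (c := w) hc'.symm (by omega) (by rw [← e]; ring)
    have hs2 : |s| ^ 2 = u + 1 := by rw [sq_abs, hs]
    have hs1 : 1 < |s| := by
      by_contra hh
      have := abs_nonneg s
      nlinarith
    have := hmin' |s| r (by rw [hs2, ← hr]; linarith) hs1
    nlinarith
  · obtain ⟨v, hv⟩ := hpd
    obtain ⟨v', hv'⟩ := hqd
    have hv0 : 0 ≤ v := by nlinarith
    have hv0' : 0 ≤ v' := by nlinarith
    have e : v * v' = w ^ 2 := by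
      apply mul_left_cancel₀ (mul_pos hp0 hq0).ne'
      rw [← key]; linear_combination (-(u+1)) * hv - p * v * hv'
    have hc' : IsCoprime v v' := (hc.of_isCoprime_of_dvd_left ⟨p, by rw [hv]; ring⟩).of_isCoprime_of_dvd_right ⟨q, by rw [hv']; ring⟩
    obtain ⟨r, hr⟩ := nonneg_sq hc' hv0 e
    obtain ⟨s, hs⟩ := nonneg_sq (c := w) hc'.symm hv0' (by rw [← e]; ring)
    refine ⟨r, s, ?_⟩
    rw [← hr, ← hs, ← hv, ← hv']; ring
  · obtain ⟨v, hv⟩ := hqd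
    obtain ⟨v', hv'⟩ := hpd
    have hv0 : 0 ≤ v := by nlinarith
    have hv0' : 0 ≤ v' := by nlinarith
    have e : v * v' = w ^ 2 := by
      apply mul_left_cancel₀ (mul_pos hp0 hq0).ne'
      rw [← key]; linear_combination (-(u+1)) * hv - q * v * hv'
    have hc' : IsCoprime v v' := (hc.of_isCoprime_of_dvd_left ⟨q, by rw [hv]; ring⟩).of_isCoprime_of_dvd_right ⟨p, by rw [hv']; ring⟩
    obtain ⟨r, hr⟩ := nonneg_sq hc' hv0 e
    obtain ⟨s, hs⟩ := nonneg_sq (c := w) hc'.symm hv0' (by rw [← e]; ring)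
    refine ⟨s, r, ?_⟩
    rw [← hr, ← hs, ← hv, ← hv']; ring
  · exfalso
    obtain ⟨v, hv⟩ := hcop.mul_dvd hpd hqd
    have hv0 : 0 ≤ v := by nlinarith [mul_pos hp0 hq0]
    have e : u * v = w ^ 2 := by
      apply mul_left_cancel₀ (mul_pos hp0 hq0).ne'
      rw [← key, hv]; ring
    have hc' : IsCoprime u v := hc.of_isCoprime_of_dvd_right ⟨p * q, by rw [hv]; ring⟩
    obtain ⟨s, hs⟩ := nonneg_sq hc' hu.le e
    obtain ⟨r, hr⟩ := nonneg_sq (c := w) hc'.symm hv0 (by rw [← e]; ring)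
    exact no_neg_one hp hq hpq hp4 s r 1 one_ne_zero (by rw [← hs, ← hr, ← hv]; ring)

section
variable {K : Type} [Field K] [NumberField K]

lemma coords (hdeg : Module.finrank ℚ K = 2) {d : ℕ} (hd : ¬ IsSquare d)
    {α : K} (hα : α ^ 2 = d) (z : K) :
    ∃ a b : ℚ, z = a + b * α ∧ Algebra.trace ℚ K z = 2 * a ∧
      Algebra.norm ℚ z = a ^ 2 - d * b ^ 2 := by
  have hirr : ∀ r : ℚ, (r : K) ≠ α := by
    rintro r rfl
    have h1 : r ^ 2 = (d : ℚ) := by exact_mod_cast hα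
    have : IsSquare ((d : ℕ) : ℚ) := ⟨r, by rw [← h1]; ring⟩
    rw [Rat.isSquare_natCast_iff] at this
    exact hd this
  have hli : LinearIndependent ℚ ![(1 : K), α] := by
    rw [LinearIndependent.pair_iff]
    intro s t h
    have ht : t = 0 := by
      by_contra ht
      apply hirr (-s / t)
      have ht' : (t : K) ≠ 0 := by exact_mod_cast ht
      push_cast
      field_simp
      simp only [Rat.smul_def] at h
      linear_combination -h
    subst ht
    simpa using h
  let B := basisOfLinearIndependentOfCardEqFinrank hli (by simp [hdeg])
  have hB : ⇑B = ![(1 : K), α] := coe_basisOfLinearIndependentOfCardEqFinrank _ _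
  have hz : z = (B.repr z 0 : K) + (B.repr z 1 : K) * α := by
    conv_lhs => rw [← B.sum_repr z]
    simp [Fin.sum_univ_two, hB, Rat.smul_def]
  generalize B.repr z 0 = a at hz
  generalize B.repr z 1 = b at hz
  have hrep : ∀ x y : ℚ, ∀ w : K, w = x + y * α → B.repr w 0 = x ∧ B.repr w 1 = y := by
    intro x y w hw
    have : w = x • B 0 + y • B 1 := by simp [hB, hw, Rat.smul_def]
    rw [this]
    simp
  have h0 := hrep a b (z * B 0) (by simp [hB, hz])
  have h1 := hrep (b * d) a (z * B 1) (by simp [hB, hz]; linear_combination b * hα)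
  refine ⟨a, b, hz, ?_, ?_⟩
  · rw [Algebra.trace_eq_matrix_trace B, Matrix.trace_fin_two]
    simp only [Algebra.leftMulMatrix_eq_repr_mul, h0, h1]; ring
  · rw [Algebra.norm_eq_matrix_det B, Matrix.det_fin_two]
    simp only [Algebra.leftMulMatrix_eq_repr_mul, h0, h1]; ring

lemma int_coords (hdeg : Module.finrank ℚ K = 2) {d : ℕ} (hd : ¬ IsSquare d) (hsf : Squarefree d)
    {α : K} (hα : α ^ 2 = d) (z : 𝓞 K) :
    ∃ t b : ℤ, 2 * (z : K) = t + b * α ∧ 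
      4 * Algebra.norm ℤ z = t ^ 2 - d * b ^ 2 := by
  obtain ⟨a, b, hz, htr, hnm⟩ := coords hdeg hd hα (z : K)
  rw [← Algebra.coe_trace_int] at htr
  rw [← Algebra.coe_norm_int] at hnm
  generalize Algebra.trace ℤ _ z = t at *
  generalize Algebra.norm ℤ z = n at *
  have hd0 : d ≠ 0 := hsf.ne_zero
  have e1 : (d * (2 * b)) ^ 2 = ((d * (t ^ 2 - 4 * n) : ℤ) : ℚ) := by
    push_cast
    rw [htr, hnm]; ring
  have hint : IsIntegral ℤ (d * (2 * b) : ℚ) := by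
    apply IsIntegral.of_pow (n := 2) (by norm_num)
    rw [e1]
    exact isIntegral_algebraMap (R := ℤ) (A := ℚ)
  obtain ⟨c, hc⟩ := IsIntegrallyClosed.isIntegral_iff.1 hint
  have hc' : (c : ℚ) = d * (2 * b) := by simpa using hc
  rw [← hc'] at e1
  have e2 : c ^ 2 = d * (t ^ 2 - 4 * n) := by exact_mod_cast e1
  have hsf' : Squarefree (d : ℤ) := Int.squarefree_natCast.2 hsf
  have : (d : ℤ) ∣ c := (hsf'.dvd_pow_iff_dvd (by norm_num)).1 ⟨_, e2⟩
  obtain ⟨b', rfl⟩ := this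
  have hb : (b' : ℚ) = 2 * b := by
    have : (d : ℚ) ≠ 0 := by exact_mod_cast hd0
    apply mul_left_cancel₀ this
    rw [← hc']; push_cast; ring
  refine ⟨t, b', ?_, ?_⟩
  · have h1 : (t : K) = 2 * a := by exact_mod_cast congrArg (Rat.cast : ℚ → K) htr
    have h2 : (b' : K) = 2 * b := by exact_mod_cast congrArg (Rat.cast : ℚ → K) hb
    rw [h1, h2, hz]; ring
  · have : (4 * n : ℚ) = t ^ 2 - d * b' ^ 2 := by rw [hb, htr, hnm]; ring
    exact_mod_cast this

/-- half-integers of the right parity are integral -/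
lemma exists_integer {α : K} {d : ℕ} (hα : α ^ 2 = d) (t b n : ℤ) (h : 4 * n = t ^ 2 - d * b ^ 2) :
    ∃ z : 𝓞 K, 2 * (z : K) = t + b * α := by
  have : IsIntegral ℤ ((t + b * α) / 2 : K) := by
    refine ⟨Polynomial.X ^ 2 - Polynomial.C t * Polynomial.X + Polynomial.C n, by monicity!, ?_⟩
    simp only [Polynomial.eval₂_add, Polynomial.eval₂_sub, Polynomial.eval₂_mul, Polynomial.eval₂_pow,
      Polynomial.eval₂_X, Polynomial.eval₂_C]
    simp only [eq_intCast]
    have : 4 * (n : K) = t ^ 2 - d * b ^ 2 := by exact_mod_cast congrArg (Int.cast : ℤ → K) h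
    linear_combination this / 4 + b ^ 2 / 4 * hα
  refine ⟨⟨_, this⟩, ?_⟩
  change 2 * ((t + b * α) / 2) = _
  field_simp

end
section
variable {K : Type} [Field K] [NumberField K]

lemma norm_nat (hdeg : Module.finrank ℚ K = 2) (l : ℕ) :
    Algebra.norm ℤ (l : 𝓞 K) = (l : ℤ) ^ 2 := by
  have := Algebra.norm_algebraMap (S := 𝓞 K) (l : ℤ)
  rw [RingOfIntegers.rank, hdeg] at this
  simpa using this

lemma unram (hdeg : Module.finrank ℚ K = 2) {d : ℕ} (hd : ¬ IsSquare d) (hsf : Squarefree d)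
    (hd4 : d % 4 = 1) {α : K} (hα : α ^ 2 = d) {l : ℕ} (hl : l.Prime) (hld : ¬ l ∣ d)
    (z w : 𝓞 K) (hzw : z ^ 2 = l * w) : (l : 𝓞 K) ∣ z := by
  obtain ⟨t, b, hz, hn⟩ := int_coords hdeg hd hsf hα z
  have hlp : Prime (l : ℤ) := Nat.prime_iff_prime_int.1 hl
  have hnl : (l : ℤ) ∣ Algebra.norm ℤ z := by
    have h1 := congrArg (Algebra.norm ℤ) hzw
    have h2 := norm_nat hdeg l
    rw [map_pow, map_mul, h2] at h1
    exact hlp.dvd_of_dvd_pow (n := 2) ⟨l * Algebra.norm ℤ w, by rw [h1]; ring⟩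
  have hquad : z ^ 2 - t * z + (Algebra.norm ℤ z : ℤ) = 0 := by
    apply RingOfIntegers.ext
    have h4 : (4 : K) * ((Algebra.norm ℤ z : ℤ) : K) = t ^ 2 - d * b ^ 2 := by
      exact_mod_cast congrArg (Int.cast : ℤ → K) hn
    have : (4 : K) * ((z : K) ^ 2 - t * z + ((Algebra.norm ℤ z : ℤ) : K)) = 0 := by
      linear_combination h4 + (2 * (z : K) - t + b * α) * hz + b ^ 2 * hα
    have h40 : (4 : K) ≠ 0 := by norm_num
    simpa using (mul_eq_zero.1 this).resolve_left h40
  generalize Algebra.norm ℤ z = n at *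
  obtain ⟨n', rfl⟩ := hnl
  by_cases hlt : (l : ℤ) ∣ t
  swap
  · have hc : IsCoprime (l : ℤ) t := (Prime.coprime_iff_not_dvd hlp).2 hlt
    have hc' : IsCoprime (l : 𝓞 K) (t : 𝓞 K) := by
      simpa using hc.map (Int.castRingHom (𝓞 K))
    apply hc'.dvd_of_dvd_mul_left
    refine ⟨w + n', ?_⟩
    push_cast at hquad
    linear_combination hzw - hquad
  obtain ⟨t, rfl⟩ := hlt
  have hld' : ¬ (l : ℤ) ∣ d := by exact_mod_cast hld
  suffices h : ∃ t' b' : ℤ, (l : ℤ) * t = l * t' ∧ b = l * b' ∧ (4 : ℤ) ∣ t' ^ 2 - d * b' ^ 2 by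
    obtain ⟨t', b', ht, hb, n, hnn⟩ := h
    obtain ⟨z', hz'⟩ := exists_integer hα t' b' n hnn.symm
    refine ⟨z', ?_⟩
    apply RingOfIntegers.ext
    rw [ht, hb] at hz
    push_cast at hz
    have : (2 : K) * (z : K) = 2 * (l * z') := by linear_combination hz - l * hz'
    simpa using this
  refine ⟨t, ?_⟩
  rcases hl.eq_two_or_odd' with rfl | hodd
  · have hdo : ∃ k : ℤ, (d : ℤ) = 4 * k + 1 := ⟨(d : ℤ) / 4, by omega⟩
    obtain ⟨k, hk⟩ := hdo
    have hb : Even b := by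
      by_contra hh
      rw [Int.not_even_iff_odd] at hh
      obtain ⟨c, rfl⟩ := hh
      rw [hk] at hn
      push_cast at hn
      ring_nf at hn
      omega
    obtain ⟨c, rfl⟩ := hb
    refine ⟨c, rfl, by push_cast; ring, ?_⟩
    have h2 : t ^ 2 - d * c ^ 2 = 2 * n' := by push_cast at hn; linarith
    rw [h2]
    rw [hk] at h2
    rcases Int.even_or_odd' t with ⟨e, rfl | rfl⟩ <;> rcases Int.even_or_odd' c with ⟨f, rfl | rfl⟩ <;>
      ring_nf at h2 <;> omega
  · have hlb : (l : ℤ) ∣ b := by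
      have : (l : ℤ) ∣ d * b ^ 2 := ⟨l * t ^ 2 - 4 * n', by linear_combination hn⟩
      exact hlp.dvd_of_dvd_pow ((hlp.dvd_or_dvd this).resolve_left hld')
    obtain ⟨c, rfl⟩ := hlb
    refine ⟨c, rfl, rfl, ?_⟩
    have hc : IsCoprime (4 : ℤ) ((l : ℤ) ^ 2) := by
      have h2 : Nat.Coprime 2 l := Nat.coprime_two_left.2 hodd
      have h3 : Nat.Coprime 4 (l ^ 2) := by
        have := Nat.Coprime.pow 2 2 h2
        simpa using this
      exact_mod_cast Nat.isCoprime_iff_coprime.2 h3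
    apply hc.dvd_of_dvd_mul_left
    exact ⟨l * n', by linear_combination -hn⟩

lemma sq_ideal_dvd (hdeg : Module.finrank ℚ K = 2) {d : ℕ} (hd : ¬ IsSquare d) (hsf : Squarefree d)
    (hd4 : d % 4 = 1) {α : K} (hα : α ^ 2 = d) {m : ℕ} (hm : Squarefree m) (J : Ideal (𝓞 K))
    (hJ : J ^ 2 = Ideal.span {(m : 𝓞 K)}) : m ∣ d := by
  rw [← Nat.prod_primeFactors_of_squarefree hm]
  apply Finset.prod_primes_dvd
  · intro l hl
    exact (Nat.prime_of_mem_primeFactors hl).prime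
  intro l hl
  have hlp := Nat.prime_of_mem_primeFactors hl
  have hlm := Nat.dvd_of_mem_primeFactors hl
  by_contra hld
  have hlm' : (l : 𝓞 K) ∣ m := Nat.cast_dvd_cast hlm
  have hJl : J ≤ Ideal.span {(l : 𝓞 K)} := by
    intro z hz
    rw [Ideal.mem_span_singleton]
    have h1 : z ^ 2 ∈ J ^ 2 := Ideal.pow_mem_pow hz 2
    rw [hJ, Ideal.mem_span_singleton] at h1
    obtain ⟨w, hw⟩ := hlm'.trans h1
    exact unram hdeg hd hsf hd4 hα hlp hld z w hw
  have h2 : J ^ 2 ≤ Ideal.span {(l : 𝓞 K) ^ 2} := by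
    rw [← Ideal.span_singleton_pow]
    exact Ideal.pow_right_mono hJl 2
  rw [hJ, Ideal.span_singleton_le_span_singleton] at h2
  have h3 := map_dvd (Algebra.norm ℤ) h2
  rw [map_pow, norm_nat hdeg, norm_nat hdeg] at h3
  have h4 : (l : ℤ) ^ 2 ∣ m := by
    rwa [Int.pow_dvd_pow_iff two_ne_zero] at h3
  have h5 : l * l ∣ m := by rw [← sq]; exact_mod_cast h4
  exact hlp.one_lt.ne' (Nat.isUnit_iff.1 (hm l h5))

lemma principal_of_mul {R : Type*} [CommRing R] [IsDedekindDomain R] {a b : R} (ha : a ≠ 0)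
    {I : Ideal R} (h : Ideal.span {a} * I = Ideal.span {b}) : I.IsPrincipal := by
  have hb : b ∈ Ideal.span {a} * I := by rw [h]; exact Ideal.mem_span_singleton_self b
  obtain ⟨c, hc, rfl⟩ := Ideal.mem_span_singleton_mul.1 hb
  rw [← Ideal.span_singleton_mul_span_singleton, Ideal.span_singleton_mul_right_inj ha] at h
  exact ⟨⟨c, h⟩⟩

lemma sq_inj {R : Type*} [CommRing R] [IsDedekindDomain R] {I J : Ideal R} (h : I ^ 2 = J ^ 2) :
    I = J := by
  apply dvd_antisymm
  · exact (UniqueFactorizationMonoid.pow_dvd_pow_iff_dvd two_ne_zero).1 h.dvd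
  · exact (UniqueFactorizationMonoid.pow_dvd_pow_iff_dvd two_ne_zero).1 h.symm.dvd

/-- an ideal whose square is generated by a nonzero natural number is principal -/
lemma principal_of_sq_nat (hdeg : Module.finrank ℚ K = 2) {p q : ℕ} (hp : p.Prime) (hq : q.Prime)
    (hpq : p ≠ q) (hp4 : p % 4 = 3) (hq4 : q % 4 = 3)
    (hd : ¬ IsSquare (p * q)) (hsf : Squarefree (p * q))
    {α : K} (hα : α ^ 2 = (p * q : ℕ)) {m : ℕ} (hm : m ≠ 0) (J : Ideal (𝓞 K))
    (hJ : J ^ 2 = Ideal.span {(m : 𝓞 K)}) : J.IsPrincipal := by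
  have hd4 : (p * q) % 4 = 1 := by rw [Nat.mul_mod, hp4, hq4]
  obtain ⟨m', k, hk, hm'⟩ := Nat.sq_mul_squarefree m
  have hk0 : (k : 𝓞 K) ≠ 0 := by
    rintro h
    have : k = 0 := by exact_mod_cast h
    subst this
    simp at hk
    exact hm hk.symm
  have hkJ : Ideal.span {(k : 𝓞 K)} ∣ J := by
    apply (UniqueFactorizationMonoid.pow_dvd_pow_iff_dvd two_ne_zero).1
    refine ⟨Ideal.span {(m' : 𝓞 K)}, ?_⟩
    rw [hJ, ← hk, Ideal.span_singleton_pow, Ideal.span_singleton_mul_span_singleton]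
    push_cast
    rfl
  obtain ⟨J', rfl⟩ := hkJ
  suffices h : J'.IsPrincipal by
    obtain ⟨⟨c, hc⟩⟩ := h
    have hc' : J' = Ideal.span {c} := hc
    rw [hc', Ideal.span_singleton_mul_span_singleton]
    exact ⟨⟨_, rfl⟩⟩
  have hJ' : J' ^ 2 = Ideal.span {(m' : 𝓞 K)} := by
    rw [mul_pow, Ideal.span_singleton_pow, ← hk] at hJ
    push_cast at hJ
    rw [← Ideal.span_singleton_mul_span_singleton,
      Ideal.span_singleton_mul_right_inj (pow_ne_zero 2 hk0)] at hJ
    exact hJ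
  clear hJ hk
  have hdvd := sq_ideal_dvd hdeg hd hsf hd4 hα hm' J' hJ'
  have hαint : IsIntegral ℤ α := by
    apply IsIntegral.of_pow (n := 2) (by norm_num)
    rw [hα]
    have := isIntegral_algebraMap (R := ℤ) (A := K) (x := ((p * q : ℕ) : ℤ))
    simpa using this
  let a : 𝓞 K := ⟨α, hαint⟩
  have ha : a ^ 2 = (p : 𝓞 K) * q := by
    apply RingOfIntegers.ext
    push_cast at hα
    have haα : algebraMap (𝓞 K) K a = α := rfl
    simpa [haα] using hα
  clear_value a
  obtain ⟨r, s, hrs⟩ := pell_consequence hp hq hpq hp4 hq4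
  have hrs' : ((p : 𝓞 K) * r ^ 2 - q * s ^ 2) ^ 2 = 1 := by exact_mod_cast congrArg (Int.cast : ℤ → 𝓞 K) hrs
  have hb : Ideal.span {(p * r + s * a : 𝓞 K)} ^ 2 = Ideal.span {(p : 𝓞 K)} := by
    rw [Ideal.span_singleton_pow, Ideal.span_singleton_eq_span_singleton]
    symm
    have hu : IsUnit ((p : 𝓞 K) * r ^ 2 + q * s ^ 2 + 2 * r * s * a) := by
      refine IsUnit.of_mul_eq_one ((p : 𝓞 K) * r ^ 2 + q * s ^ 2 - 2 * r * s * a) ?_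
      linear_combination hrs' - 4 * r ^ 2 * s ^ 2 * ha
    refine ⟨hu.unit, ?_⟩
    rw [IsUnit.unit_spec]
    linear_combination - s ^ 2 * ha
  have hp0 : (p : 𝓞 K) ≠ 0 := by exact_mod_cast hp.ne_zero
  rw [Nat.dvd_mul] at hdvd
  obtain ⟨x, y, hx, hy, rfl⟩ := hdvd
  rcases (Nat.dvd_prime hp).1 hx with rfl | rfl <;> rcases (Nat.dvd_prime hq).1 hy with rfl | rfl
  · have : J' = Ideal.span {1} := sq_inj (by rw [hJ', Ideal.span_singleton_pow]; simp)
    exact ⟨⟨_, this⟩⟩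
  · refine principal_of_mul (a := (p * r + s * a : 𝓞 K)) (b := a) ?_ ?_
    · intro h
      rw [h] at hb
      have h2 : Ideal.span {(p : 𝓞 K)} = ⊥ := by rw [← hb]; simp
      exact hp0 (Ideal.span_singleton_eq_bot.1 h2)
    · apply sq_inj
      rw [mul_pow, hb, hJ', Ideal.span_singleton_pow, ha, Ideal.span_singleton_mul_span_singleton]
      simp
  · have : J' = Ideal.span {(x * r + s * a : 𝓞 K)} := sq_inj (by rw [hJ', hb]; simp)
    exact ⟨⟨_, this⟩⟩
  · have : J' = Ideal.span {a} := sq_inj (by rw [hJ', Ideal.span_singleton_pow, ha]; simp)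
    exact ⟨⟨_, this⟩⟩

lemma principal_of_sq (hdeg : Module.finrank ℚ K = 2) {p q : ℕ} (hp : p.Prime) (hq : q.Prime)
    (hpq : p ≠ q) (hp4 : p % 4 = 3) (hq4 : q % 4 = 3)
    {α : K} (hα : α ^ 2 = (p * q : ℕ)) {x : 𝓞 K} (hx : x ≠ 0) (I : Ideal (𝓞 K))
    (hI : I ^ 2 = Ideal.span {x}) : I.IsPrincipal := by
  have hsf : Squarefree (p * q) :=
    (Nat.squarefree_mul ((Nat.coprime_primes hp hq).2 hpq)).2 ⟨hp.prime.squarefree, hq.prime.squarefree⟩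
  have hd : ¬ IsSquare (p * q) := by
    rintro ⟨r, hr⟩
    have h1 : IsUnit r := hsf r (hr ▸ dvd_rfl)
    rw [Nat.isUnit_iff] at h1
    subst h1
    exact hp.one_lt.ne' (Nat.eq_one_of_mul_eq_one_right hr)
  obtain ⟨t, b, ht, hn⟩ := int_coords hdeg hd hsf hα x
  have habs : (Ideal.absNorm I) ^ 2 = (Algebra.norm ℤ x).natAbs := by
    rw [← map_pow, hI, Ideal.absNorm_span_singleton]
  generalize Ideal.absNorm I = n at *
  have hnx0 : Algebra.norm ℤ x ≠ 0 := by
    rwa [Ne, Algebra.norm_eq_zero_iff]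
  have hn0 : n ≠ 0 := by
    rintro rfl
    apply hnx0
    simpa using habs.symm
  have hnorm : Algebra.norm ℤ x = (n : ℤ) ^ 2 := by
    rcases Int.natAbs_eq (Algebra.norm ℤ x) with h | h
    · rw [h, ← habs]; push_cast; rfl
    · exfalso
      rw [h, ← habs] at hn
      push_cast at hn
      apply no_neg_one hp hq hpq hp4 t b (2 * n) (by simpa using hn0)
      linear_combination -hn
  rw [hnorm] at hn
  have hkey : (x + n) ^ 2 = (t + 2 * n : ℤ) * x := by
    apply RingOfIntegers.ext
    have h4 : (4 : K) * (n : K) ^ 2 = t ^ 2 - p * q * b ^ 2 := by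
      exact_mod_cast congrArg (Int.cast : ℤ → K) hn
    push_cast at hα
    have : (4 : K) * (((x : K) + n) ^ 2 - (t + 2 * n) * x) = 0 := by
      linear_combination h4 + (2 * (x : K) - t + b * α) * ht + b ^ 2 * hα
    have h40 : (4 : K) ≠ 0 := by norm_num
    have := (mul_eq_zero.1 this).resolve_left h40
    simpa [map_ofNat (algebraMap (𝓞 K) K) 2] using sub_eq_zero.1 this
  by_cases hy : x + n = 0
  · refine principal_of_sq_nat hdeg hp hq hpq hp4 hq4 hd hsf hα hn0 I ?_
    rw [hI, eq_neg_of_add_eq_zero_left hy, Ideal.span_singleton_neg]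
  generalize x + n = y at *
  generalize t + 2 * (n : ℤ) = m at *
  have hm0 : (m : 𝓞 K) ≠ 0 := by
    intro h
    rw [h, zero_mul] at hkey
    exact hy (pow_eq_zero_iff two_ne_zero |>.1 hkey)
  have hmi : m ≠ 0 := by rintro rfl; simp at hm0
  have hyI : Ideal.span {y} ∣ Ideal.span {(m : 𝓞 K)} * I := by
    apply (UniqueFactorizationMonoid.pow_dvd_pow_iff_dvd two_ne_zero).1
    refine ⟨Ideal.span {(m : 𝓞 K)}, ?_⟩
    rw [mul_pow, hI]
    simp only [Ideal.span_singleton_pow, Ideal.span_singleton_mul_span_singleton]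
    rw [hkey]
    congr 2
    ring
  obtain ⟨J, hJ⟩ := hyI
  have hJ2 : J ^ 2 = Ideal.span {(m : 𝓞 K)} := by
    have h := congrArg (· ^ 2) hJ
    simp only [mul_pow, hI, Ideal.span_singleton_pow, Ideal.span_singleton_mul_span_singleton] at h
    have e : (m : 𝓞 K) ^ 2 * x = y ^ 2 * m := by rw [hkey]; ring
    rw [e, ← Ideal.span_singleton_mul_span_singleton,
      Ideal.span_singleton_mul_right_inj (pow_ne_zero 2 hy)] at h
    exact h.symm
  have hJp : J.IsPrincipal := by
    refine principal_of_sq_nat hdeg hp hq hpq hp4 hq4 hd hsf hα (m := m.natAbs) (by simpa using hmi) J ?_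
    rw [hJ2]
    rcases Int.natAbs_eq m with h | h
    · conv_lhs => rw [h]
      simp
    · conv_lhs => rw [h]
      rw [Int.cast_neg, Ideal.span_singleton_neg]
      simp
  obtain ⟨⟨c, hc⟩⟩ := hJp
  have hc' : J = Ideal.span {c} := hc
  rw [hc', Ideal.span_singleton_mul_span_singleton] at hJ
  exact principal_of_mul hm0 hJ

end

/-- For distinct primes `p` and `q` with `p ≡ 3 (mod 4)` and `q ≡ 3 (mod 4)`, the class
number of the real quadratic field `ℚ(√(pq))` (formalized as any degree-2 number field
containing a square root of `p*q`) is odd. -/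
theorem odd_classNumber_of_sqrt_pq_three_mod_four
    (p q : ℕ) (hp : p.Prime) (hq : q.Prime) (hpq : p ≠ q)
    (hp4 : p % 4 = 3) (hq4 : q % 4 = 3)
    (K : Type) [Field K] [NumberField K]
    (hdeg : Module.finrank ℚ K = 2)
    (α : K) (hα : α ^ 2 = ((p : K) * q)) :
    Odd (NumberField.classNumber K) := by
  by_contra hodd
  rw [Nat.not_odd_iff_even, even_iff_two_dvd] at hodd
  have : Fact (Nat.Prime 2) := ⟨Nat.prime_two⟩
  obtain ⟨c, hc⟩ := exists_prime_orderOf_dvd_card (G := ClassGroup (𝓞 K)) 2 hodd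
  have hc2 : c ^ 2 = 1 := by rw [← hc]; exact pow_orderOf_eq_one c
  obtain ⟨I, rfl⟩ := ClassGroup.mk0_surjective c
  rw [← map_pow, ClassGroup.mk0_eq_one_iff] at hc2
  obtain ⟨⟨x, hx⟩⟩ := hc2
  have hx' : (I : Ideal (𝓞 K)) ^ 2 = Ideal.span {x} := by simpa using hx
  have hI0 : (I : Ideal (𝓞 K)) ≠ 0 := nonZeroDivisors.coe_ne_zero I
  have hx0 : x ≠ 0 := by
    rintro rfl
    apply pow_ne_zero 2 hI0
    rw [hx']; simp
  have hpr := principal_of_sq hdeg hp hq hpq hp4 hq4 (α := α) (by rw [hα]; push_cast; rfl) hx0 I hx'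
  have h1 : ClassGroup.mk0 I = 1 := (ClassGroup.mk0_eq_one_iff I.2).2 hpr
  rw [h1, orderOf_one] at hc
  omega
end

section
/- For every prime q with q ≡ 3 (mod 4), the class number of the real quadratic field ℚ(√(2q)) is odd. -/
open NumberField

theorem aux_dvd (q : ℕ) (hq : q.Prime) (hq4 : q % 4 = 3) (x n : ℤ)
    (h : (q : ℤ) ∣ x ^ 2 + n ^ 2) : (q : ℤ) ∣ x ∧ (q : ℤ) ∣ n := by
  have := Fact.mk hq
  have h1 : (x : ZMod q) ^ 2 = - (n : ZMod q) ^ 2 := by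
    have := (ZMod.intCast_zmod_eq_zero_iff_dvd _ q).2 h
    push_cast at this
    linear_combination this
  have hn : (n : ZMod q) = 0 := by
    by_contra hn
    exact ZMod.mod_four_ne_three_of_sq_eq_neg_sq' hn h1 hq4
  have hx : (x : ZMod q) = 0 := by simpa [hn] using h1
  exact ⟨(ZMod.intCast_zmod_eq_zero_iff_dvd _ q).1 hx, (ZMod.intCast_zmod_eq_zero_iff_dvd _ q).1 hn⟩

theorem aux_nosol (q : ℕ) (hq : q.Prime) (hq4 : q % 4 = 3) (k : ℕ) : ∀ (x n y : ℤ),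
    y.natAbs ≤ k → x ^ 2 + n ^ 2 = 2 * q * y ^ 2 → y = 0 := by
  induction k with
  | zero => intro x n y hy _; omega
  | succ k ih =>
    intro x n y hy h
    have hqp : Prime (q : ℤ) := Nat.prime_iff_prime_int.mp hq
    have hq0 : (q : ℤ) ≠ 0 := hqp.ne_zero
    obtain ⟨⟨x', rfl⟩, ⟨n', rfl⟩⟩ := aux_dvd q hq hq4 x n ⟨2 * y ^ 2, by rw [h]; ring⟩
    have h2 : (q : ℤ) * (x' ^ 2 + n' ^ 2) = 2 * y ^ 2 := by
      apply mul_left_cancel₀ hq0; linear_combination h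
    have h3 : (q : ℤ) ∣ y := by
      rcases hqp.dvd_or_dvd (Dvd.intro _ h2 : (q : ℤ) ∣ 2 * y ^ 2) with h3 | h3
      · have := Int.le_of_dvd (by norm_num) h3
        have := hq.two_le
        omega
      · exact hqp.dvd_of_dvd_pow h3
    obtain ⟨y', rfl⟩ := h3
    have h4 := ih x' n' y' (by
      by_cases h0 : y' = 0
      · subst h0; simp
      rw [Int.natAbs_mul, Int.natAbs_natCast] at hy
      have : y'.natAbs ≠ 0 := by omega
      have := hq.two_le
      nlinarith [Nat.pos_of_ne_zero ‹y'.natAbs ≠ 0›]) (by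
        apply mul_left_cancel₀ hq0; linear_combination h2)
    rw [h4, mul_zero]

theorem aux_not_sq (q : ℕ) (hq : q.Prime) (hq4 : q % 4 = 3) : ¬ IsSquare (2 * q : ℤ) := by
  rintro ⟨r, hr⟩
  have h := aux_nosol q hq hq4 1 r 0 1 (by simp) (by linear_combination -hr)
  omega

theorem aux_pell (q : ℕ) (hq : q.Prime) (hq4 : q % 4 = 3) :
    ∃ a e : ℤ, (2 * a ^ 2 - q * e ^ 2 = 1 ∨ 2 * a ^ 2 - q * e ^ 2 = -1) := by
  have hqp : Prime (q : ℤ) := Nat.prime_iff_prime_int.mp hq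
  have hq0 : (q : ℤ) ≠ 0 := hqp.ne_zero
  have hqpos : (0 : ℤ) < q := by exact_mod_cast hq.pos
  obtain ⟨s, hs⟩ := Pell.IsFundamental.exists_of_not_isSquare (d := 2 * q)
    (by positivity) (aux_not_sq q hq hq4)
  have hx1 : 1 < s.x := hs.1
  have hp := s.prop
  have hmin : ∀ x y : ℤ, 1 < x → x ^ 2 - 2 * q * y ^ 2 = 1 → s.x ≤ x := by
    intro x y hx h
    exact hs.x_le_x (a := Pell.Solution₁.mk x y h) hx
  generalize s.x = x at *
  generalize s.y = y at *
  obtain ⟨u, rfl⟩ : ∃ u, x = 2 * u + 1 := by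
    rcases Int.even_or_odd' x with ⟨u, h | h⟩
    · exfalso
      subst h
      have : 2 * (2 * u ^ 2 - q * y ^ 2) = 1 := by linear_combination hp
      omega
    · exact ⟨u, h⟩
  have hu : 2 * (u * (u + 1)) = q * y ^ 2 := by
    have : 2 * (2 * (u * (u + 1))) = 2 * (q * y ^ 2) := by linear_combination hp
    linarith
  obtain ⟨z, rfl⟩ : ∃ z, y = 2 * z := by
    have h2 : (2 : ℤ) ∣ q * y ^ 2 := ⟨_, hu.symm⟩
    rcases Int.prime_two.dvd_or_dvd h2 with h | h
    · omega
    · exact Int.prime_two.dvd_of_dvd_pow h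
  have hz : u * (u + 1) = 2 * q * z ^ 2 := by
    have : 2 * (u * (u + 1)) = 2 * (2 * q * z ^ 2) := by linear_combination hu
    linarith
  have hu0 : 0 < u := by omega
  have hcop : IsCoprime u (u + 1) := ⟨-1, 1, by ring⟩
  -- squares
  have key : ∀ A B : ℤ, 0 < A → 0 < B → IsCoprime A B → A * B = z ^ 2 →
      ∃ a b : ℤ, A = a ^ 2 ∧ B = b ^ 2 := by
    intro A B hA hB hc h
    obtain ⟨a, ha⟩ := Int.sq_of_isCoprime hc h
    obtain ⟨b, hb⟩ := Int.sq_of_isCoprime hc.symm (by rw [mul_comm]; exact h)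
    refine ⟨a, b, ?_, ?_⟩
    · rcases ha with h | h
      · exact h
      · nlinarith [sq_nonneg a]
    · rcases hb with h | h
      · exact h
      · nlinarith [sq_nonneg b]
  have hq2 : ¬ (q : ℤ) ∣ 2 := by
    intro h
    have := Int.le_of_dvd (by norm_num) h
    have := hq.two_le
    omega
  have hdq : (q : ℤ) ∣ u ∨ (q : ℤ) ∣ u + 1 := hqp.dvd_or_dvd ⟨2 * z ^ 2, by rw [hz]; ring⟩
  have hd2 : (2 : ℤ) ∣ u ∨ (2 : ℤ) ∣ u + 1 := by omega
  have hc2 : IsCoprime (2 : ℤ) q := by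
    rw [Int.isCoprime_iff_gcd_eq_one, Int.gcd]
    simp
    exact Nat.odd_iff.2 (by omega)
  rcases hd2 with h2 | h2 <;> rcases hdq with h3 | h3
  · obtain ⟨v, hv⟩ := hc2.mul_dvd h2 h3
    have hv0 : 0 < v := by by_contra hh; nlinarith
    obtain ⟨b, a, hb, ha⟩ := key v (u + 1) hv0 (by omega)
      (hcop.of_isCoprime_of_dvd_left ⟨2 * q, by rw [hv]; ring⟩) (by
        apply mul_left_cancel₀ (show (2 * q : ℤ) ≠ 0 by positivity)
        rw [← hz]; nth_rw 2 [hv]; ring)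
    exfalso
    have ha1 : 1 < |a| := by
      by_contra hh
      have : |a| ^ 2 ≤ 1 := by nlinarith [abs_nonneg a]
      rw [sq_abs] at this
      omega
    have := hmin |a| b ha1 (by rw [sq_abs, ← ha, ← hb]; linear_combination hv)
    nlinarith [sq_abs a]
  · obtain ⟨v, hv⟩ := h2
    obtain ⟨w, hw⟩ := h3
    have hv0 : 0 < v := by omega
    have hw0 : 0 < w := by by_contra hh; nlinarith
    obtain ⟨a, b, ha, hb⟩ := key v w hv0 hw0
      ((hcop.of_isCoprime_of_dvd_left ⟨2, by rw [hv]; ring⟩).of_isCoprime_of_dvd_right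
        ⟨q, by rw [hw]; ring⟩) (by
        apply mul_left_cancel₀ (show (2 * q : ℤ) ≠ 0 by positivity)
        rw [← hz, hw]; rw [hv]; ring)
    refine ⟨a, b, Or.inr ?_⟩
    rw [← ha, ← hb]; linear_combination hw - hv
  · obtain ⟨v, hv⟩ := h2
    obtain ⟨w, hw⟩ := h3
    have hv0 : 0 < v := by omega
    have hw0 : 0 < w := by by_contra hh; nlinarith
    obtain ⟨b, a, hb, ha⟩ := key w v hw0 hv0
      ((hcop.of_isCoprime_of_dvd_left ⟨q, by rw [hw]; ring⟩).of_isCoprime_of_dvd_right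
        ⟨2, by rw [hv]; ring⟩) (by
        apply mul_left_cancel₀ (show (2 * q : ℤ) ≠ 0 by positivity)
        rw [← hz, hv]; rw [hw]; ring)
    refine ⟨a, b, Or.inl ?_⟩
    rw [← ha, ← hb]; linear_combination hw - hv
  · obtain ⟨v, hv⟩ := hc2.mul_dvd h2 h3
    have hv0 : 0 < v := by by_contra hh; nlinarith
    obtain ⟨a, b, ha, hb⟩ := key u v hu0 hv0
      (hcop.of_isCoprime_of_dvd_right ⟨2 * q, by rw [hv]; ring⟩) (by
        apply mul_left_cancel₀ (show (2 * q : ℤ) ≠ 0 by positivity)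
        rw [← hz, hv]; ring)
    exfalso
    have := aux_nosol q hq hq4 b.natAbs a 1 b le_rfl (by rw [← ha, ← hb]; linear_combination hv)
    subst this
    omega

theorem aux_norm_trace {R S : Type*} [CommRing R] [CommRing S] [Algebra R S]
    (b : Module.Basis (Fin 2) R S) (a : S) (d : R) (h0 : b 0 = 1) (h1 : b 1 = a)
    (ha : a ^ 2 = algebraMap R S d) (x y : R) :
    Algebra.norm R (algebraMap R S x + algebraMap R S y * a) = x ^ 2 - d * y ^ 2 ∧
    Algebra.trace R S (algebraMap R S x + algebraMap R S y * a) = 2 * x := by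
  have r : ∀ u v : R, b.repr (algebraMap R S u + algebraMap R S v * a) =
      Finsupp.single 0 u + Finsupp.single 1 v := by
    intro u v
    rw [← b.repr.apply_symm_apply (Finsupp.single 0 u + Finsupp.single 1 v)]
    congr 1
    simp [h0, h1, Algebra.smul_def]
  have r0 := r x y
  have r1 : b.repr ((algebraMap R S x + algebraMap R S y * a) * a) =
      Finsupp.single 0 (d * y) + Finsupp.single 1 x := by
    rw [← r]
    congr 1
    rw [map_mul]
    linear_combination (algebraMap R S y) * ha
  constructor
  · rw [Algebra.norm_eq_matrix_det b, Matrix.det_fin_two]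
    simp [Algebra.leftMulMatrix_eq_repr_mul, h0, h1, r0, r1]
    ring
  · rw [Algebra.trace_eq_matrix_trace b, Matrix.trace_fin_two]
    simp [Algebra.leftMulMatrix_eq_repr_mul, h0, h1, r0, r1]
    ring

theorem aux_int_of_sq (r : ℚ) (q : ℕ) (hq : q.Prime) (hq4 : q % 4 = 3) (n : ℤ)
    (h : 2 * q * r ^ 2 = n) : ∃ m : ℤ, r = m := by
  have hqp : Prime (q : ℤ) := Nat.prime_iff_prime_int.mp hq
  have hsf : Squarefree (2 * q : ℤ) := by
    have : Squarefree (2 * q : ℕ) := by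
      rw [Nat.squarefree_mul_iff]
      refine ⟨?_, Nat.prime_two.squarefree, hq.squarefree⟩
      rw [Nat.coprime_primes Nat.prime_two hq]; omega
    exact_mod_cast Int.squarefree_natCast.2 this
  have hd : (r.den : ℤ) ∣ 1 := by
    have h1 : (2 * q : ℤ) * r.num ^ 2 = n * r.den ^ 2 := by
      have hr : (r.den : ℚ) ≠ 0 := by exact_mod_cast r.den_nz
      have h2 : (r.num : ℚ) = r * r.den := (Rat.mul_den_eq_num r).symm
      have : (2 * q : ℚ) * r.num ^ 2 = n * r.den ^ 2 := by
        rw [h2]; linear_combination (r.den : ℚ) ^ 2 * h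
      exact_mod_cast this
    have hc : IsCoprime ((r.den : ℤ) * r.den) (r.num ^ 2) := by
      have : IsCoprime (r.num) (r.den : ℤ) := by
        rw [Int.isCoprime_iff_gcd_eq_one]; exact r.reduced
      exact (IsCoprime.mul_left this.symm this.symm).pow_right
    have h3 : (r.den : ℤ) * r.den ∣ 2 * q := by
      apply hc.dvd_of_dvd_mul_right
      exact ⟨n, by rw [h1]; ring⟩
    exact isUnit_iff_dvd_one.1 (hsf _ h3)
  have : r.den = 1 := by exact_mod_cast Int.eq_one_of_dvd_one (by positivity) hd
  exact ⟨r.num, (Rat.coe_int_num_of_den_eq_one this).symm⟩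

open NumberField

theorem aux_lin (q : ℕ) (hq : q.Prime) (hq4 : q % 4 = 3)
    {K : Type*} [Field K] [NumberField K] (α : K) (hα : α ^ 2 = (2 * q : K)) (x y : ℚ)
    (h : (x : K) + y * α = 0) : x = 0 ∧ y = 0 := by
  have hy : y = 0 := by
    by_contra hy
    have h1 : (x : K) ^ 2 = 2 * q * y ^ 2 := by
      have : (x : K) = - (y * α) := by linear_combination h
      rw [this]; linear_combination (y : K) ^ 2 * hα
    have h2 : x ^ 2 = 2 * q * y ^ 2 := by exact_mod_cast h1
    obtain ⟨m, hm⟩ := aux_int_of_sq (x / y / (2 * q)) q hq hq4 1 (by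
      have : (q : ℚ) ≠ 0 := by exact_mod_cast hq.ne_zero
      field_simp
      push_cast
      linear_combination h2)
    apply aux_not_sq q hq hq4
    refine ⟨2 * q * m, ?_⟩
    have : (q : ℚ) ≠ 0 := by exact_mod_cast hq.ne_zero
    have : (2 * q : ℚ) = (2 * q * m) * (2 * q * m) := by
      rw [← hm]; field_simp; linear_combination - h2
    exact_mod_cast this
  subst hy
  simpa using h

theorem aux_ring (q : ℕ) (hq : q.Prime) (hq4 : q % 4 = 3)
    {K : Type*} [Field K] [NumberField K] (hdeg : Module.finrank ℚ K = 2)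
    (α : K) (hα : α ^ 2 = (2 * q : K)) (x : K) (hx : IsIntegral ℤ x) :
    ∃ m n : ℤ, x = m + n * α := by
  have hli : LinearIndependent ℚ ![(1 : K), α] := by
    rw [LinearIndependent.pair_iff]
    intro s t h
    apply aux_lin q hq hq4 α hα
    simpa [Algebra.smul_def] using h
  let b := basisOfLinearIndependentOfCardEqFinrank hli (by simp [hdeg])
  have hb0 : b 0 = 1 := by simp [b]
  have hb1 : b 1 = α := by simp [b]
  obtain ⟨r, s, hrs⟩ : ∃ r s : ℚ, x = algebraMap ℚ K r + algebraMap ℚ K s * α := by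
    refine ⟨b.repr x 0, b.repr x 1, ?_⟩
    have := b.sum_repr x
    rw [Fin.sum_univ_two, hb0, hb1] at this
    simpa [Algebra.smul_def] using this.symm
  obtain ⟨hN, hT⟩ := aux_norm_trace b α (2 * q) hb0 hb1 (by rw [hα]; simp) r s
  rw [← hrs] at hN hT
  obtain ⟨N, hN'⟩ := IsIntegrallyClosed.isIntegral_iff.1 (Algebra.isIntegral_norm ℚ hx)
  obtain ⟨T, hT'⟩ := IsIntegrallyClosed.isIntegral_iff.1 (Algebra.isIntegral_trace (L := ℚ) hx)
  rw [hN] at hN'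
  rw [hT] at hT'
  simp only [eq_intCast] at hN' hT'
  obtain ⟨S, hS⟩ := aux_int_of_sq (2 * s) q hq hq4 (T ^ 2 - 4 * N) (by
    push_cast; rw [hT', hN']; ring)
  have h1 : T ^ 2 - 2 * q * S ^ 2 = 4 * N := by
    have : (T ^ 2 - 2 * q * S ^ 2 : ℚ) = 4 * N := by
      rw [hT', hN', ← hS]; ring
    exact_mod_cast this
  obtain ⟨T', rfl⟩ : (2 : ℤ) ∣ T :=
    Int.prime_two.dvd_of_dvd_pow (n := 2) ⟨q * S ^ 2 + 2 * N, by linear_combination h1⟩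
  obtain ⟨S', rfl⟩ : (2 : ℤ) ∣ S := by
    have : (2 : ℤ) ∣ q * S ^ 2 := ⟨T' ^ 2 - N, by linarith⟩
    rcases Int.prime_two.dvd_or_dvd this with h | h
    · omega
    · exact Int.prime_two.dvd_of_dvd_pow h
  refine ⟨T', S', ?_⟩
  push_cast at hT' hS
  have e1 : r = T' := by linarith
  have e2 : s = S' := by linarith
  rw [hrs, e1, e2]; simp

/-- Descent for ideals whose square is generated by an integer. -/
theorem aux_descent {O : Type*} [CommRing O] [IsDedekindDomain O] [CharZero O]
    (hdvd : ∀ m n : ℤ, (m : O) ∣ (n : O) → m ∣ n)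
    (H : ∀ p : ℕ, p.Prime → ∃ π : O, ∃ k : ℕ, k ≠ 0 ∧ Associated (π ^ 2) ((p : O) ^ k) ∧
      ∀ x : O, (p : O) ∣ x ^ 2 → π ∣ x) (N : ℕ) :
    ∀ (t : ℤ) (J : Ideal O), t ≠ 0 → t.natAbs ≤ N → J ^ 2 = Ideal.span {(t : O)} →
      ∃ g, J = Ideal.span {g} := by
  induction N with
  | zero => intro t J h1 h2; omega
  | succ N ih =>
    intro t J ht hN hJ
    by_cases h1 : t.natAbs = 1
    · refine ⟨1, ?_⟩
      have hu : IsUnit (t : O) := (Int.isUnit_iff_natAbs_eq.2 h1).map (Int.castRingHom O)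
      rw [Ideal.span_singleton_eq_top.2 hu] at hJ
      rw [Ideal.span_singleton_one, eq_top_iff, ← hJ]
      exact Ideal.pow_le_self two_ne_zero
    · obtain ⟨p, hp, hpt⟩ := Nat.exists_prime_and_dvd h1
      obtain ⟨π, k, hk, hass, hπ⟩ := H p hp
      have hpt' : (p : O) ∣ (t : O) := by
        have : (p : ℤ) ∣ t := Int.natCast_dvd.2 hpt
        simpa using map_dvd (Int.castRingHom O) this
      have hle : J ≤ Ideal.span {π} := by
        intro x hx
        rw [Ideal.mem_span_singleton]
        apply hπ
        refine hpt'.trans ?_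
        rw [← Ideal.mem_span_singleton, ← hJ]
        exact Ideal.pow_mem_pow hx 2
      obtain ⟨J', rfl⟩ := Ideal.dvd_iff_le.2 hle
      rw [mul_pow, Ideal.span_singleton_pow, Ideal.span_singleton_eq_span_singleton.2 hass] at hJ
      have hd : ((p : ℤ) ^ k) ∣ t := by
        apply hdvd
        push_cast
        rw [← Ideal.mem_span_singleton]
        have : (t : O) ∈ Ideal.span {(t : O)} := Ideal.mem_span_singleton_self _
        rw [← hJ] at this
        exact (Ideal.mul_le_left : Ideal.span {(p : O) ^ k} * J' ^ 2 ≤ _) this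
      obtain ⟨t', rfl⟩ := hd
      have hp0 : (p : O) ^ k ≠ 0 := pow_ne_zero _ (by exact_mod_cast hp.ne_zero)
      have hJ' : J' ^ 2 = Ideal.span {(t' : O)} := by
        apply mul_left_cancel₀ (a := Ideal.span {(p : O) ^ k})
        · rwa [Ne, Ideal.zero_eq_bot, Ideal.span_singleton_eq_bot]
        · rw [hJ, Ideal.span_singleton_mul_span_singleton]; push_cast; rfl
      have ht' : t' ≠ 0 := right_ne_zero_of_mul ht
      obtain ⟨g, rfl⟩ := ih t' J' ht' (by
        rw [Int.natAbs_mul, Int.natAbs_pow, Int.natAbs_natCast] at hN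
        have : 2 ≤ p ^ k := hp.two_le.trans (Nat.le_self_pow hk p)
        have : 0 < t'.natAbs := Int.natAbs_pos.2 ht'
        nlinarith) hJ'
      exact ⟨π * g, Ideal.span_singleton_mul_span_singleton _ _⟩

theorem aux_primes {O : Type*} [CommRing O] (q : ℕ) (hq : q.Prime) (hq4 : q % 4 = 3) (a : O)
    (ha : a ^ 2 = 2 * q)
    (rep : ∀ x : O, ∃ m n : ℤ, x = m + n * a)
    (hdvd : ∀ p m n : ℤ, (p : O) ∣ m + n * a → p ∣ m ∧ p ∣ n) :
    ∀ p : ℕ, p.Prime → ∃ π : O, ∃ k : ℕ, k ≠ 0 ∧ Associated (π ^ 2) ((p : O) ^ k) ∧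
      ∀ x : O, (p : O) ∣ x ^ 2 → π ∣ x := by
  intro p hp
  have hqp : Prime (q : ℤ) := Nat.prime_iff_prime_int.mp hq
  have hpp : Prime (p : ℤ) := Nat.prime_iff_prime_int.mp hp
  have hsq : ∀ m n : ℤ, (p : O) ∣ ((m : O) + n * a) ^ 2 →
      (p : ℤ) ∣ m ^ 2 + 2 * q * n ^ 2 ∧ (p : ℤ) ∣ 2 * m * n := by
    intro m n h
    apply hdvd
    have e : ((m : O) + n * a) ^ 2 = ((m ^ 2 + 2 * q * n ^ 2 : ℤ) : O) + ((2 * m * n : ℤ) : O) * a := by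
      push_cast; linear_combination (n : O) ^ 2 * ha
    rw [e] at h
    simpa using h
  obtain ⟨A, e, hAe⟩ := aux_pell q hq hq4
  obtain ⟨s, hs, hs1⟩ : ∃ s : ℤ, 2 * A ^ 2 - q * e ^ 2 = s ∧ s ^ 2 = 1 := by
    rcases hAe with h | h
    · exact ⟨1, h, by norm_num⟩
    · exact ⟨-1, h, by norm_num⟩
  have hsO : 2 * (A : O) ^ 2 - q * (e : O) ^ 2 = s := by exact_mod_cast congrArg (Int.cast : ℤ → O) hs
  have hs1O : (s : O) ^ 2 = 1 := by exact_mod_cast congrArg (Int.cast : ℤ → O) hs1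
  have hu : (2 * (A : O) ^ 2 + q * e ^ 2 + 2 * A * e * a) *
      (2 * (A : O) ^ 2 + q * e ^ 2 - 2 * A * e * a) = 1 := by
    rw [← hs1O, ← hsO]; linear_combination -4 * (A : O) ^ 2 * e ^ 2 * ha
  have hu' := hu
  rw [mul_comm] at hu'
  by_cases h2 : p = 2
  · subst h2
    refine ⟨2 * A + e * a, 1, one_ne_zero, ⟨⟨_, _, hu', hu⟩, ?_⟩, ?_⟩
    · push_cast
      linear_combination 2 * hu + (e : O) ^ 2 * (2 * (A : O) ^ 2 + q * e ^ 2 - 2 * A * e * a) * ha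
    · intro x hx
      obtain ⟨m, n, rfl⟩ := rep x
      obtain ⟨h1, -⟩ := hsq m n hx
      obtain ⟨m', rfl⟩ : (2 : ℤ) ∣ m := by
        apply Int.prime_two.dvd_of_dvd_pow (n := 2)
        have h3 : (2 : ℤ) ∣ 2 * q * n ^ 2 := ⟨q * n ^ 2, by ring⟩
        exact (dvd_add_left h3).1 (by exact_mod_cast h1)
      refine ⟨m' * s * (2 * A - e * a) + n * s * (A * a - q * e), ?_⟩
      push_cast
      linear_combination (-(2 * m' + n * a) : O) * hs1O - (s : O) * (2 * m' + n * a) * hsO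
        + (m' * s * e ^ 2 - n * s * e * A : O) * ha
  by_cases h3 : p = q
  · subst h3
    refine ⟨p * e - A * a, 1, one_ne_zero, ⟨⟨_, _, hu, hu'⟩, ?_⟩, ?_⟩
    · push_cast
      linear_combination p * hu + (A : O) ^ 2 * (2 * (A : O) ^ 2 + p * e ^ 2 + 2 * A * e * a) * ha
    · intro x hx
      obtain ⟨m, n, rfl⟩ := rep x
      obtain ⟨h1, -⟩ := hsq m n hx
      obtain ⟨m', rfl⟩ : (p : ℤ) ∣ m := by
        apply hpp.dvd_of_dvd_pow (n := 2)
        have h3 : (p : ℤ) ∣ 2 * p * n ^ 2 := ⟨2 * n ^ 2, by ring⟩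
        exact (dvd_add_left h3).1 h1
      refine ⟨-m' * s * (p * e + A * a) - n * s * (2 * A + e * a), ?_⟩
      push_cast
      linear_combination (-(p * m' + n * a) : O) * hs1O - (s : O) * (p * m' + n * a) * hsO
        - (m' * s * A ^ 2 + n * s * e * A : O) * ha
  · refine ⟨p, 2, two_ne_zero, Associated.refl _, ?_⟩
    intro x hx
    obtain ⟨m, n, rfl⟩ := rep x
    obtain ⟨h1, h4⟩ := hsq m n hx
    have hp2 : ¬ (p : ℤ) ∣ 2 := by
      intro h
      exact h2 ((Nat.prime_dvd_prime_iff_eq hp Nat.prime_two).1 (by exact_mod_cast h))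
    have hpq : ¬ (p : ℤ) ∣ q := by
      intro h
      exact h3 ((Nat.prime_dvd_prime_iff_eq hp hq).1 (by exact_mod_cast h))
    have hmn : (p : ℤ) ∣ m ∧ (p : ℤ) ∣ n := by
      have hm : (p : ℤ) ∣ m ∨ (p : ℤ) ∣ n := by
        rcases hpp.dvd_or_dvd h4 with h | h
        · exact Or.inl ((hpp.dvd_or_dvd h).resolve_left hp2)
        · exact Or.inr h
      rcases hm with h | h
      · refine ⟨h, ?_⟩
        have : (p : ℤ) ∣ 2 * q * n ^ 2 := (dvd_add_right (dvd_pow h two_ne_zero)).1 h1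
        rcases hpp.dvd_or_dvd this with h5 | h5
        · rcases hpp.dvd_or_dvd h5 with h6 | h6
          · exact absurd h6 hp2
          · exact absurd h6 hpq
        · exact hpp.dvd_of_dvd_pow h5
      · refine ⟨?_, h⟩
        exact hpp.dvd_of_dvd_pow ((dvd_add_left ((dvd_pow h two_ne_zero).mul_left _)).1 h1)
    obtain ⟨⟨m', rfl⟩, ⟨n', rfl⟩⟩ := hmn
    exact ⟨m' + n' * a, by push_cast; ring⟩

theorem aux_principal (q : ℕ) (hq : q.Prime) (hq4 : q % 4 = 3)
    {O : Type*} [CommRing O] [IsDedekindDomain O] [CharZero O] [Module.Free ℤ O] (a : O)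
    (ha : a ^ 2 = 2 * q)
    (rep : ∀ x : O, ∃ m n : ℤ, x = m + n * a)
    (ind : ∀ m n : ℤ, (m : O) + n * a = 0 → m = 0 ∧ n = 0)
    (I : Ideal O) (hI : I ≠ ⊥) (β : O) (hβ : I ^ 2 = Ideal.span {β}) :
    ∃ g, I = Ideal.span {g} := by
  have hdvd : ∀ p m n : ℤ, (p : O) ∣ m + n * a → p ∣ m ∧ p ∣ n := by
    rintro p m n ⟨c, hc⟩
    obtain ⟨u, v, rfl⟩ := rep c
    obtain ⟨h1, h2⟩ := ind (m - p * u) (n - p * v) (by push_cast; linear_combination hc)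
    exact ⟨⟨u, by linarith⟩, ⟨v, by linarith⟩⟩
  have D := aux_descent (O := O) (fun m n h => (hdvd m n 0 (by simpa using h)).1)
    (aux_primes q hq hq4 a ha rep hdvd)
  have hli : LinearIndependent ℤ ![(1 : O), a] := by
    rw [LinearIndependent.pair_iff]
    intro s t h
    apply ind
    simpa using h
  let b := Module.Basis.mk hli (by
    intro x _
    obtain ⟨m, n, rfl⟩ := rep x
    apply add_mem
    · have : (m : O) = m • (1 : O) := by simp
      rw [this]
      exact Submodule.smul_mem _ _ (Submodule.subset_span ⟨0, rfl⟩)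
    · rw [← zsmul_eq_mul]
      exact Submodule.smul_mem _ _ (Submodule.subset_span ⟨1, rfl⟩))
  have hb0 : b 0 = 1 := by simp [b]
  have hb1 : b 1 = a := by simp [b]
  have hfin : Module.Finite ℤ O := Module.Finite.of_basis b
  obtain ⟨x, y, hxy⟩ := rep β
  have hN := (aux_norm_trace b a (2 * q) hb0 hb1 (by rw [ha]; simp) x y).1
  have hβ0 : β ≠ 0 := by
    rintro rfl
    rw [Set.singleton_zero, Ideal.span_zero] at hβ
    exact hI (pow_eq_zero_iff two_ne_zero |>.1 hβ)
  simp only [eq_intCast] at hN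
  rw [← hxy] at hN
  obtain ⟨n, hn⟩ : ∃ n : ℕ, (n ^ 2 : ℕ) = (x ^ 2 - 2 * q * y ^ 2).natAbs := by
    refine ⟨Ideal.absNorm I, ?_⟩
    rw [← map_pow, hβ, Ideal.absNorm_span_singleton, hN]
  have hn' : x ^ 2 - 2 * q * y ^ 2 = (n : ℤ) ^ 2 := by
    rcases Int.natAbs_eq (x ^ 2 - 2 * q * y ^ 2) with h | h
    · rw [h, ← hn]; push_cast; rfl
    · exfalso
      rw [← hn] at h
      push_cast at h
      have hy := aux_nosol q hq hq4 y.natAbs x n y le_rfl (by linear_combination h)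
      subst hy
      have hx : x = 0 := by nlinarith [sq_nonneg (n : ℤ)]
      subst hx
      apply hβ0; simp [hxy]
  have hnO : (x : O) ^ 2 - 2 * q * y ^ 2 = (n : O) ^ 2 := by
    exact_mod_cast congrArg (Int.cast : ℤ → O) hn'
  by_cases hδ : (n : O) + β = 0
  · have hβn : β = ((-n : ℤ) : O) := by push_cast; linear_combination hδ
    rw [hβn] at hβ
    refine D _ (-n) I ?_ le_rfl hβ
    intro h
    apply hβ0; rw [hβn, h]; simp
  · have hsq : ((n : O) + β) ^ 2 = β * ((2 * n + 2 * x : ℤ) : O) := by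
      rw [hxy]; push_cast
      linear_combination -hnO + (y : O) ^ 2 * ha
    generalize ht : (2 * n + 2 * x : ℤ) = t at hsq
    generalize (n : O) + β = δ at hsq hδ
    have ht0 : t ≠ 0 := by
      rintro rfl
      apply hδ
      simpa using hsq
    have hd : I ∣ Ideal.span {δ} := by
      rw [← UniqueFactorizationMonoid.pow_dvd_pow_iff_dvd two_ne_zero, hβ, Ideal.span_singleton_pow, hsq,
        ← Ideal.span_singleton_mul_span_singleton]
      exact dvd_mul_right _ _
    obtain ⟨J, hJ⟩ := hd
    have hJ2 : J ^ 2 = Ideal.span {(t : O)} := by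
      apply mul_left_cancel₀ (a := I ^ 2) (pow_ne_zero 2 hI)
      rw [← mul_pow, ← hJ, Ideal.span_singleton_pow, hsq,
        ← Ideal.span_singleton_mul_span_singleton, hβ]
    obtain ⟨g, rfl⟩ := D _ t J ht0 le_rfl hJ2
    have hg : δ ∈ Ideal.span {g} := by
      have : δ ∈ Ideal.span {δ} := Ideal.mem_span_singleton_self _
      rw [hJ] at this
      exact (Ideal.mul_le_right : I * Ideal.span {g} ≤ _) this
    obtain ⟨h, rfl⟩ := Ideal.mem_span_singleton.1 hg
    refine ⟨h, ?_⟩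
    apply mul_right_cancel₀ (b := Ideal.span {g})
    · rw [Ne, Ideal.zero_eq_bot, Ideal.span_singleton_eq_bot]
      exact left_ne_zero_of_mul hδ
    · rw [← hJ, Ideal.span_singleton_mul_span_singleton, mul_comm]

theorem aux_ringOfIntegers (q : ℕ) (hq : q.Prime) (hq4 : q % 4 = 3)
    (K : Type) [Field K] [NumberField K] (hdeg : Module.finrank ℚ K = 2)
    (α : K) (hα : α ^ 2 = (2 * q : K))
    (I : Ideal (𝓞 K)) (hI : I ≠ ⊥) (β : 𝓞 K) (hβ : I ^ 2 = Ideal.span {β}) :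
    ∃ g, I = Ideal.span {g} := by
  have hαi : IsIntegral ℤ α := by
    refine IsIntegral.of_pow two_pos ?_
    rw [hα]
    exact_mod_cast (isIntegral_algebraMap (R := ℤ) (A := K) (x := (2 * q : ℤ)))
  let a : 𝓞 K := ⟨α, hαi⟩
  have haK : algebraMap (𝓞 K) K a = α := rfl
  exact aux_principal q hq hq4 a (by
      apply RingOfIntegers.ext
      change algebraMap (𝓞 K) K (a ^ 2) = algebraMap (𝓞 K) K (2 * q)
      rw [map_pow, haK, hα, map_mul, map_natCast, map_ofNat]) (by
      intro x
      obtain ⟨m, n, h⟩ := aux_ring q hq hq4 hdeg α hα x x.isIntegral_coe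
      refine ⟨m, n, ?_⟩
      apply RingOfIntegers.ext
      simp [haK, h]) (by
      intro m n h
      have h' := congrArg (algebraMap (𝓞 K) K) h
      push_cast [map_add, map_mul] at h'
      have := aux_lin q hq hq4 α hα m n (by simpa [haK] using h')
      exact_mod_cast this) I hI β hβ

theorem aux_odd (G : Type*) [CommGroup G] [Fintype G] (h : ∀ C : G, C ^ 2 = 1 → C = 1) : Odd (Fintype.card G) := by
  rw [← Nat.not_even_iff_odd, even_iff_two_dvd]
  intro h2
  obtain ⟨C, hC⟩ := exists_prime_orderOf_dvd_card 2 h2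
  have hsq : C ^ 2 = 1 := orderOf_dvd_iff_pow_eq_one.1 (dvd_of_eq hC)
  rw [h C hsq, orderOf_one] at hC
  exact absurd hC (by norm_num)

theorem aux_cl {O : Type*} [CommRing O] [IsDedekindDomain O]
    (h : ∀ (I : Ideal O), I ≠ ⊥ → ∀ β : O, I ^ 2 = Ideal.span {β} → ∃ g, I = Ideal.span {g})
    (C : ClassGroup O) (hC : C ^ 2 = 1) : C = 1 := by
  obtain ⟨⟨I, hI⟩, rfl⟩ := ClassGroup.mk0_surjective C
  have hI2 : I ^ 2 ∈ nonZeroDivisors (Ideal O) := pow_mem hI 2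
  have hC' : ClassGroup.mk0 ⟨I ^ 2, hI2⟩ = 1 := by
    rw [← hC, ← map_pow]
    rfl
  have hp : (I ^ 2).IsPrincipal := (ClassGroup.mk0_eq_one_iff hI2).1 hC'
  obtain ⟨β, hβ⟩ := hp.principal
  obtain ⟨g, hg⟩ := h I (nonZeroDivisors.ne_zero hI) β hβ
  have hp' : I.IsPrincipal := ⟨⟨g, hg⟩⟩
  exact (ClassGroup.mk0_eq_one_iff hI).2 hp'

/-- For every prime `q` with `q ≡ 3 (mod 4)`, the class number of the real quadratic
field `ℚ(√(2q))` (formalized as any degree-2 number field containing a square root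
of `2*q`) is odd. -/
theorem odd_classNumber_of_sqrt_two_q_three_mod_four
    (q : ℕ) (hq : q.Prime) (hq4 : q % 4 = 3)
    (K : Type) [Field K] [NumberField K]
    (hdeg : Module.finrank ℚ K = 2)
    (α : K) (hα : α ^ 2 = (2 * q : K)) :
    Odd (NumberField.classNumber K) := by
  exact aux_odd _ (aux_cl (aux_ringOfIntegers q hq hq4 K hdeg α hα))
end

section
/- Let m > 1 be a squarefree integer. If the class number of the real quadratic field ℚ(√m) is odd, then either m is a prime, or m = pq for primes p and q where p = 2 or p ≡ 3 (mod 4), and q ≡ 3 (mod 4). -/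
open NumberField

section aux
variable {K : Type} [Field K] [NumberField K]

lemma aux_not_rat_sq {m : ℤ} (hm : 1 < m) (hsf : Squarefree m) (r : ℚ) : r ^ 2 ≠ (m : ℚ) := by
  intro h
  have h1 : IsSquare ((m : ℤ) : ℚ) := ⟨r, by rw [← h, sq]⟩
  rw [Rat.isSquare_intCast_iff] at h1
  obtain ⟨k, hk⟩ := h1
  have hu := hsf k ⟨1, by rw [hk, mul_one]⟩
  rcases Int.isUnit_iff.1 hu with h | h <;> subst h <;> omega

lemma aux_repr {m : ℤ} (hm : 1 < m) (hsf : Squarefree m)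
    (hdeg : Module.finrank ℚ K = 2) {α : K} (hα : α ^ 2 = (m : K)) (x : K) :
    ∃ c e : ℚ, x = (c : K) + (e : K) * α := by
  have hli : LinearIndependent ℚ ![(1 : K), α] := by
    rw [LinearIndependent.pair_iff]
    intro s t hst
    rw [Rat.smul_def, Rat.smul_def, mul_one] at hst
    have ht : t = 0 := by
      by_contra ht
      apply aux_not_rat_sq hm hsf (s / t)
      have htK : (t : K) ≠ 0 := by exact_mod_cast ht
      have : (((s / t) ^ 2 : ℚ) : K) = ((m : ℚ) : K) := by
        push_cast
        rw [← hα]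
        field_simp
        linear_combination ((s : K) - t * α) * hst
      exact_mod_cast this
    subst ht
    refine ⟨?_, rfl⟩
    simpa using hst
  have hspan := hli.span_eq_top_of_card_eq_finrank (by simp [hdeg])
  have hx : x ∈ Submodule.span ℚ (Set.range ![(1 : K), α]) := by rw [hspan]; trivial
  simp only [Matrix.range_cons, Matrix.range_empty, Set.union_empty, Set.singleton_union] at hx
  rw [Submodule.mem_span_pair] at hx
  obtain ⟨c, e, h⟩ := hx
  exact ⟨c, e, by rw [← h, Rat.smul_def, Rat.smul_def, mul_one]⟩

lemma aux_indep {m : ℤ} (hm : 1 < m) (hsf : Squarefree m)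
    {α : K} (hα : α ^ 2 = (m : K)) (s t : ℚ) (hst : (s : K) + (t : K) * α = 0) : s = 0 ∧ t = 0 := by
  have ht : t = 0 := by
    by_contra ht
    apply aux_not_rat_sq hm hsf (s / t)
    have htK : (t : K) ≠ 0 := by exact_mod_cast ht
    have : (((s / t) ^ 2 : ℚ) : K) = ((m : ℚ) : K) := by
      push_cast
      rw [← hα]
      field_simp
      linear_combination ((s : K) - t * α) * hst
    exact_mod_cast this
  subst ht
  refine ⟨?_, rfl⟩
  simpa using hst

/-- torsion units are `±1` -/
lemma aux_torsion {m : ℤ} (hm : 1 < m) (hsf : Squarefree m)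
    (hdeg : Module.finrank ℚ K = 2) {α : K} (hα : α ^ 2 = (m : K)) (u : (𝓞 K)ˣ)
    (hu : u ∈ Units.torsion K) : ((u : 𝓞 K) : K) = 1 ∨ ((u : 𝓞 K) : K) = -1 := by
  rw [Units.torsion, CommGroup.mem_torsion, isOfFinOrder_iff_pow_eq_one] at hu
  obtain ⟨n, hn, hun⟩ := hu
  have hun' : ((u : 𝓞 K) : K) ^ n = 1 := by
    have := congrArg (fun v : (𝓞 K)ˣ => ((v : 𝓞 K) : K)) hun
    simpa using this
  obtain ⟨c, e, hx⟩ := aux_repr hm hsf hdeg hα ((u : 𝓞 K) : K)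
  let φ : K →+* ℂ := Classical.arbitrary _
  have hαr : ∃ r : ℝ, φ α = r := by
    have h1 : (φ α) ^ 2 = ((Real.sqrt m : ℝ) : ℂ) ^ 2 := by
      rw [← map_pow, hα, map_intCast, ← Complex.ofReal_pow, Real.sq_sqrt (by positivity)]
      simp
    rcases sq_eq_sq_iff_eq_or_eq_neg.1 h1 with h | h
    · exact ⟨_, h⟩
    · exact ⟨-Real.sqrt m, by rw [h]; push_cast; rfl⟩
  obtain ⟨r, hr⟩ := hαr
  have hux : φ ((u : 𝓞 K) : K) = ((c + e * r : ℝ) : ℂ) := by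
    rw [hx, map_add, map_mul, hr]; push_cast; simp
  have h2 : ((c + e * r : ℝ)) ^ n = 1 := by
    have : φ (((u : 𝓞 K) : K) ^ n) = 1 := by rw [hun', map_one]
    rw [map_pow, hux] at this
    exact_mod_cast this
  have h3 : |(c + e * r : ℝ)| = 1 := by
    have : |(c + e * r : ℝ)| ^ n = 1 := by rw [← abs_pow, h2, abs_one]
    exact (pow_eq_one_iff_of_nonneg (abs_nonneg _) hn.ne').1 this
  rcases eq_or_eq_neg_of_abs_eq h3 with h | h
  · left; apply φ.injective; rw [hux, h]; simp
  · right; apply φ.injective; rw [hux, h]; simp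

lemma aux_rank (hdeg : Module.finrank ℚ K = 2) : Units.rank K ≤ 1 := by
  have h1 := InfinitePlace.card_add_two_mul_card_eq_rank K
  have h2 := InfinitePlace.card_eq_nrRealPlaces_add_nrComplexPlaces K
  rw [Units.rank, h2]
  omega

lemma aux_units {m : ℤ} (hm : 1 < m) (hsf : Squarefree m)
    (hdeg : Module.finrank ℚ K = 2) {α : K} (hα : α ^ 2 = (m : K)) (u v : (𝓞 K)ˣ) :
    ∃ w : (𝓞 K)ˣ, ∃ s : K, (w = u ∨ w = v ∨ w = u * v) ∧ 
      (((w : 𝓞 K) : K) = s ^ 2 ∨ ((w : 𝓞 K) : K) = - s ^ 2) := by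
  have key : ∀ (w ζ : (𝓞 K)ˣ) (f : Fin (Units.rank K) → ℤ), ζ ∈ Units.torsion K → 
      w = ζ * ∏ i, (Units.fundSystem K i) ^ (f i) → (∀ i, Even (f i)) →
      ∃ s : K, (((w : 𝓞 K) : K) = s ^ 2 ∨ ((w : 𝓞 K) : K) = - s ^ 2) := by
    intro w ζ f hζ hw hf
    choose g hg using hf
    have hw2 : w = ζ * (∏ i, (Units.fundSystem K i) ^ (g i)) ^ 2 := by
      rw [hw, ← Finset.prod_pow]
      congr 1
      refine Finset.prod_congr rfl fun i _ => ?_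
      rw [hg i, zpow_add, sq]
    refine ⟨(((∏ i, (Units.fundSystem K i) ^ (g i) : (𝓞 K)ˣ) : 𝓞 K) : K), ?_⟩
    have hw3 : ((w : 𝓞 K) : K) = ((ζ : 𝓞 K) : K) *
        (((∏ i, (Units.fundSystem K i) ^ (g i) : (𝓞 K)ˣ) : 𝓞 K) : K) ^ 2 := by
      have := congrArg (fun v : (𝓞 K)ˣ => ((v : 𝓞 K) : K)) hw2
      simp only [Units.val_mul, Units.val_pow_eq_pow_val, map_mul, map_pow] at this
      exact this
    rcases aux_torsion hm hsf hdeg hα ζ hζ with h | h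
    · left; rw [hw3, h, one_mul]
    · right; rw [hw3, h, neg_one_mul]
  obtain ⟨⟨ζ, f⟩, hu, -⟩ := Units.exist_unique_eq_mul_prod K u
  obtain ⟨⟨η, g⟩, hv, -⟩ := Units.exist_unique_eq_mul_prod K v
  simp only at hu hv
  by_cases hf : ∀ i, Even (f i)
  · obtain ⟨s, hs⟩ := key u ζ f ζ.2 hu hf
    exact ⟨u, s, Or.inl rfl, hs⟩
  by_cases hg : ∀ i, Even (g i)
  · obtain ⟨s, hs⟩ := key v η g η.2 hv hg
    exact ⟨v, s, Or.inr (Or.inl rfl), hs⟩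
  push Not at hf hg
  obtain ⟨i, hi⟩ := hf
  obtain ⟨j, hj⟩ := hg
  obtain ⟨s, hs⟩ := key (u * v) (ζ * η) (fun i => f i + g i) (mul_mem ζ.2 η.2) (by
    simp only [zpow_add, Finset.prod_mul_distrib]
    conv_lhs => rw [hu, hv]
    exact mul_mul_mul_comm _ _ _ _) (by
    have hr := aux_rank (K := K) hdeg
    intro k
    have hki : k = i := Fin.ext (by omega)
    have hkj : k = j := Fin.ext (by omega)
    rw [← hki] at hi; rw [← hkj] at hj
    exact (by simpa using hi : Odd (f k)).add_odd (by simpa using hj))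
  exact ⟨u * v, s, Or.inr (Or.inr rfl), hs⟩

/-- `x` is a unit times a square. -/
def AuxGood (x : K) : Prop := ∃ (u : (𝓞 K)ˣ) (γ : K), γ ≠ 0 ∧ x = ((u : 𝓞 K) : K) * γ ^ 2

lemma aux_good {m : ℤ} (hm : 1 < m) (hsf : Squarefree m)
    (hdeg : Module.finrank ℚ K = 2) {α : K} (hα : α ^ 2 = (m : K)) {x y : K} 
    (hx : AuxGood x) (hy : AuxGood y) :
    ∃ w s : K, (w = x ∨ w = y ∨ w = x * y) ∧ (s ^ 2 = w ∨ s ^ 2 = -w) := by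
  obtain ⟨u, γ, hγ, rfl⟩ := hx
  obtain ⟨v, δ, hδ, rfl⟩ := hy
  obtain ⟨w, s, hw, hs⟩ := aux_units hm hsf hdeg hα u v
  rcases hw with rfl | rfl | rfl
  · refine ⟨_, s * γ, Or.inl rfl, ?_⟩
    rcases hs with h | h <;> rw [h]
    · left; ring
    · right; ring
  · refine ⟨_, s * δ, Or.inr (Or.inl rfl), ?_⟩
    rcases hs with h | h <;> rw [h]
    · left; ring
    · right; ring
  · refine ⟨_, s * γ * δ, Or.inr (Or.inr rfl), ?_⟩
    simp only [Units.val_mul, map_mul] at hs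
    rcases hs with h | h 
    · left; linear_combination -γ^2*δ^2*h
    · right; linear_combination γ^2*δ^2*h

lemma aux_good_of_ideal (hodd : Odd (NumberField.classNumber K)) (x : 𝓞 K) (hx : x ≠ 0)
    (I : Ideal (𝓞 K)) (hI : I ^ 2 = Ideal.span {x}) : AuxGood (x : K) := by
  have hI0 : I ≠ 0 := by
    rintro rfl
    rw [zero_pow two_ne_zero, eq_comm, Ideal.zero_eq_bot, Ideal.span_singleton_eq_bot] at hI
    exact hx hI
  have hp : I.IsPrincipal := by
    refine Ideal.IsPrincipal.of_isPrincipal_pow_of_coprime (n := 2) ?_ ?_ 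
    · rw [Nat.coprime_two_left]; exact hodd
    · rw [hI]; exact ⟨x, rfl⟩
  obtain ⟨γ, hγ⟩ := hp
  change I = Ideal.span {γ} at hγ
  rw [hγ, Ideal.span_singleton_pow, Ideal.span_singleton_eq_span_singleton] at hI
  obtain ⟨u, hu⟩ := hI
  refine ⟨u, γ, ?_, ?_⟩
  · intro h
    apply hI0
    have : γ = 0 := by exact_mod_cast h
    rw [hγ, this]; simp
  · rw [← hu]; push_cast; ring

/-- elements of negative norm are not plus or minus squares -/
lemma aux_neg_norm {m : ℤ} (hm : 1 < m) (hsf : Squarefree m)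
    (hdeg : Module.finrank ℚ K = 2) {α : K} (hα : α ^ 2 = (m : K)) (a b : ℚ) 
    (hab : a ^ 2 - m * b ^ 2 < 0) (s : K) 
    (hs : s ^ 2 = (a : K) + (b : K) * α ∨ s ^ 2 = -((a : K) + (b : K) * α)) : False := by
  obtain ⟨c, e, rfl⟩ := aux_repr hm hsf hdeg hα s
  have key : ∀ a b : ℚ, a ^ 2 - m * b ^ 2 < 0 → 
      ((c : K) + (e : K) * α) ^ 2 = (a : K) + (b : K) * α → False := by
    intro a b hab h
    have := aux_indep hm hsf hα (c ^ 2 + e ^ 2 * m - a) (2 * c * e - b) (by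
      push_cast; linear_combination h - e ^ 2 * hα)
    obtain ⟨h1, h2⟩ := this
    have ha : a = c ^ 2 + e ^ 2 * m := by linarith
    have hb : b = 2 * c * e := by linarith
    subst ha hb
    nlinarith [sq_nonneg (c ^ 2 - e ^ 2 * m)]
  rcases hs with h | h
  · exact key a b hab h
  · exact key (-a) (-b) (by linarith [neg_sq a, neg_sq b]) (by rw [h]; push_cast; ring)

/-- a squarefree natural number other than `1, m` is not plus or minus a square. -/
lemma aux_sqfree {m : ℤ} (hm : 1 < m) (hsf : Squarefree m)
    (hdeg : Module.finrank ℚ K = 2) {α : K} (hα : α ^ 2 = (m : K)) (d : ℤ) (hd : 1 < d)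
    (hdsf : Squarefree d) (hdm : d ≠ m) (s : K) 
    (hs : s ^ 2 = (d : K) ∨ s ^ 2 = -(d : K)) : False := by
  obtain ⟨c, e, rfl⟩ := aux_repr hm hsf hdeg hα s
  have hmq : (0 : ℚ) < m := by exact_mod_cast (by omega : 0 < m)
  have hdq : (0 : ℚ) < d := by exact_mod_cast (by omega : 0 < d)
  have key : ∀ a : ℚ, ((c : K) + (e : K) * α) ^ 2 = (a : K) → a = c ^ 2 ∨ a = e ^ 2 * m := by
    intro a h
    obtain ⟨h1, h2⟩ := aux_indep hm hsf hα (c ^ 2 + e ^ 2 * m - a) (2 * c * e) (by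
      push_cast; linear_combination h - e ^ 2 * hα)
    rcases mul_eq_zero.1 h2 with h | h
    · have : c = 0 := by linarith
      subst this; right; linarith
    · subst h; left; linarith
  rcases hs with h | h
  · rcases key d (by rw [h]; simp) with h | h
    · exact aux_not_rat_sq hd hdsf c h.symm
    · have h1 : IsSquare ((d * m : ℤ) : ℚ) := ⟨e * m, by push_cast; rw [h]; ring⟩
      rw [Rat.isSquare_intCast_iff] at h1
      obtain ⟨k, hk⟩ := h1
      rw [← sq] at hk
      have hdk : d ∣ k := (hdsf.dvd_pow_iff_dvd two_ne_zero).1 ⟨m, hk.symm⟩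
      have hmk : m ∣ k := (hsf.dvd_pow_iff_dvd two_ne_zero).1 ⟨d, by rw [← hk, mul_comm]⟩
      have h2 : d ∣ m := by
        have := pow_dvd_pow_of_dvd hdk 2
        rw [← hk, sq] at this
        exact (mul_dvd_mul_iff_left (by omega)).1 this
      have h3 : m ∣ d := by
        have := pow_dvd_pow_of_dvd hmk 2
        rw [← hk, sq] at this
        exact (mul_dvd_mul_iff_right (by omega)).1 this
      exact hdm (Int.dvd_antisymm (by omega) (by omega) h2 h3)
  · rcases key (-d) (by rw [h]; simp) with h | h
    · nlinarith [sq_nonneg c]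
    · nlinarith [mul_nonneg (sq_nonneg e) hmq.le]

lemma aux_ideal_sq_s6 {R : Type*} [CommRing R] (a d n r s : R) (ha : a * a = d * n)
    (h : r * d + s * n = 1) : (Ideal.span {d, a}) ^ 2 = Ideal.span {d} := by
  rw [sq, Ideal.span_pair_mul_span_pair]
  apply le_antisymm
  · rw [Ideal.span_le]
    intro x hx
    simp only [Set.mem_insert_iff, Set.mem_singleton_iff] at hx
    rw [SetLike.mem_coe, Ideal.mem_span_singleton]
    rcases hx with rfl | rfl | rfl | rfl
    · exact ⟨d, rfl⟩
    · exact ⟨a, rfl⟩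
    · exact ⟨a, mul_comm _ _⟩
    · exact ⟨n, ha⟩
  · rw [Ideal.span_singleton_le_iff_mem]
    have e : d = r * (d * d) + s * (a * a) := by
      rw [ha]; linear_combination -d * h
    have h1 : d * d ∈ Ideal.span {d * d, d * a, a * d, a * a} := Ideal.subset_span (by simp)
    have h2 : a * a ∈ Ideal.span {d * d, d * a, a * d, a * a} := Ideal.subset_span (by simp)
    have := Ideal.add_mem _ (Ideal.mul_mem_left _ r h1) (Ideal.mul_mem_left _ s h2)
    rwa [← e] at this

lemma aux_ideal_two {R : Type*} [CommRing R] (a k : R) (ha : a ^ 2 = 4 * k + 3) :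
    (Ideal.span {2, 1 + a}) ^ 2 = Ideal.span {(2 : R)} := by
  rw [sq, Ideal.span_pair_mul_span_pair]
  apply le_antisymm
  · rw [Ideal.span_le]
    intro x hx
    simp only [Set.mem_insert_iff, Set.mem_singleton_iff] at hx
    rw [SetLike.mem_coe, Ideal.mem_span_singleton]
    rcases hx with rfl | rfl | rfl | rfl
    · exact ⟨2, rfl⟩
    · exact ⟨1 + a, rfl⟩
    · exact ⟨1 + a, mul_comm _ _⟩
    · exact ⟨2 * k + 2 + a, by linear_combination ha⟩
  · rw [Ideal.span_singleton_le_iff_mem]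
    have e : 2 = (k + 1) * (2 * 2) + (2 * (1 + a) + (-1) * ((1 + a) * (1 + a))) := by
      linear_combination ha
    have h1 : (2 : R) * 2 ∈ Ideal.span {(2 : R) * 2, 2 * (1 + a), (1 + a) * 2, (1 + a) * (1 + a)} :=
      Ideal.subset_span (by simp)
    have h2 : 2 * (1 + a) ∈ Ideal.span {(2 : R) * 2, 2 * (1 + a), (1 + a) * 2, (1 + a) * (1 + a)} :=
      Ideal.subset_span (by simp)
    have h3 : (1 + a) * (1 + a) ∈
        Ideal.span {(2 : R) * 2, 2 * (1 + a), (1 + a) * 2, (1 + a) * (1 + a)} :=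
      Ideal.subset_span (by simp)
    have := Ideal.add_mem _ (Ideal.mul_mem_left _ (k + 1) h1)
      (Ideal.add_mem _ h2 (Ideal.mul_mem_left _ (-1) h3))
    rwa [← e] at this

lemma aux_int {m : ℤ} {α : K} (hα : α ^ 2 = (m : K)) :
    ∃ a : 𝓞 K, (a : K) = α ∧ a ^ 2 = (m : 𝓞 K) := by
  have h : IsIntegral ℤ α := by
    apply IsIntegral.of_pow (n := 2) two_pos
    rw [hα]
    exact isIntegral_algebraMap (R := ℤ) (A := K) (x := m)
  refine ⟨⟨α, h⟩, rfl, ?_⟩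
  apply RingOfIntegers.ext
  exact hα

lemma aux_good_dvd {m : ℤ} (hsf : Squarefree m) {α : K} (hα : α ^ 2 = (m : K))
    (hodd : Odd (NumberField.classNumber K)) (d : ℤ) (hd : 1 < d) (hdm : d ∣ m) :
    AuxGood (d : K) := by
  obtain ⟨n, rfl⟩ := hdm
  obtain ⟨a, -, ha⟩ := aux_int hα
  obtain ⟨r, s, hrs⟩ := (squarefree_mul_iff.1 hsf).1.isCoprime
  have hI := aux_ideal_sq_s6 a (d : 𝓞 K) n r s (by rw [← sq, ha]; push_cast; rfl)
    (by exact_mod_cast congrArg (fun z : ℤ => (z : 𝓞 K)) hrs)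
  have := aux_good_of_ideal hodd (d : 𝓞 K) (by
    exact_mod_cast (by omega : d ≠ 0)) _ hI
  simpa using this

lemma aux_good_two {m : ℤ} {α : K} (hα : α ^ 2 = (m : K))
    (hodd : Odd (NumberField.classNumber K)) (hm4 : m % 4 = 3) :
    AuxGood ((2 : ℤ) : K) := by
  obtain ⟨a, -, ha⟩ := aux_int hα
  obtain ⟨k, rfl⟩ : ∃ k, m = 4 * k + 3 := ⟨m / 4, by omega⟩
  have hI := aux_ideal_two a (k : 𝓞 K) (by rw [ha]; push_cast; rfl)
  have := aux_good_of_ideal hodd (2 : 𝓞 K) two_ne_zero _ hI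
  have e : (((2 : 𝓞 K)) : K) = ((2 : ℤ) : K) := by
    rw [Int.cast_ofNat]
    exact map_ofNat (algebraMap (𝓞 K) K) 2
  rwa [e] at this

lemma aux_good_sum {a b : ℤ} {α : K} (hα : α ^ 2 = ((a ^ 2 + b ^ 2 : ℤ) : K))
    (hodd : Odd (NumberField.classNumber K)) (hb : Odd b) (hab : IsCoprime a b) :
    AuxGood ((a : K) + α) := by
  obtain ⟨β, rfl, hβ⟩ := aux_int hα
  have hb0 : b ≠ 0 := by rintro rfl; simp at hb
  have h2 : IsCoprime (2 * a) (b ^ 2) := by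
    apply IsCoprime.pow_right
    apply IsCoprime.mul_left _ hab
    rw [Int.isCoprime_iff_gcd_eq_one]
    exact (Int.isCoprime_iff_gcd_eq_one.1 (by
      obtain ⟨k, rfl⟩ := hb
      exact ⟨-k, 1, by ring⟩))
  obtain ⟨r, s, hrs⟩ := h2
  have hrs' : (r : 𝓞 K) * (2 * a) + s * b ^ 2 = 1 := by
    exact_mod_cast congrArg (fun z : ℤ => (z : 𝓞 K)) hrs
  push_cast at hβ
  have hprod : ((a : 𝓞 K) + β) * (a - β) = -b ^ 2 := by linear_combination -hβ
  have hc : IsCoprime ((a : 𝓞 K) + β) (a - β) :=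
    ⟨r - s * (a - β), r, by linear_combination hrs' - s * hprod⟩
  have hne : (a : 𝓞 K) + β ≠ 0 := by
    intro h
    rw [h, zero_mul] at hprod
    have : (b : 𝓞 K) ^ 2 = 0 := by linear_combination hprod
    exact hb0 (by exact_mod_cast pow_eq_zero_iff two_ne_zero |>.1 this)
  have hcI : IsCoprime (Ideal.span {(a : 𝓞 K) + β}) (Ideal.span {(a : 𝓞 K) - β}) :=
    (Ideal.isCoprime_span_singleton_iff _ _).2 hc
  have hmul : Ideal.span {(a : 𝓞 K) + β} * Ideal.span {(a : 𝓞 K) - β}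
      = (Ideal.span {(b : 𝓞 K)}) ^ 2 := by
    rw [Ideal.span_singleton_mul_span_singleton, hprod, Ideal.span_singleton_neg,
      Ideal.span_singleton_pow]
  obtain ⟨I, hI⟩ := exists_eq_pow_of_mul_eq_pow_of_coprime hcI hmul
  have := aux_good_of_ideal hodd _ hne I hI.symm
  simpa using this

lemma aux_two_false {m : ℤ} (hm : 1 < m) (hsf : Squarefree m)
    (hdeg : Module.finrank ℚ K = 2) {α : K} (hα : α ^ 2 = (m : K)) (d e : ℤ) (hd : 1 < d)
    (he : 1 < e) (hde : Squarefree (d * e)) (hdm : d ≠ m) (hem : e ≠ m) (hdem : d * e ≠ m)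
    (gd : AuxGood (d : K)) (ge : AuxGood (e : K)) : False := by
  obtain ⟨w, s, hw, hs⟩ := aux_good hm hsf hdeg hα gd ge
  rcases hw with rfl | rfl | rfl
  · exact aux_sqfree hm hsf hdeg hα d hd (hde.of_mul_left) hdm s hs
  · exact aux_sqfree hm hsf hdeg hα e he (hde.of_mul_right) hem s hs
  · exact aux_sqfree hm hsf hdeg hα (d * e) (by nlinarith) hde hdem s (by push_cast; exact hs)

lemma aux_sum_false {a b : ℤ} (hm : 1 < a ^ 2 + b ^ 2) (hsf : Squarefree (a ^ 2 + b ^ 2))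
    (hdeg : Module.finrank ℚ K = 2) {α : K} (hα : α ^ 2 = ((a ^ 2 + b ^ 2 : ℤ) : K))
    (hodd : Odd (NumberField.classNumber K)) (hb : Odd b) (hab : IsCoprime a b)
    (d : ℤ) (hd : 1 < d) (hdm : d ∣ a ^ 2 + b ^ 2) (hne : d ≠ a ^ 2 + b ^ 2) : False := by
  have hb0 : b ≠ 0 := by rintro rfl; simp at hb
  have hbq : (0 : ℚ) < (b : ℚ) ^ 2 := by positivity
  have hdq : (0 : ℚ) < (d : ℚ) := by exact_mod_cast (by omega : 0 < d)
  obtain ⟨w, s, hw, hs⟩ := aux_good hm hsf hdeg hα (aux_good_sum hα hodd hb hab)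
    (aux_good_dvd hsf hα hodd d hd hdm)
  rcases hw with rfl | rfl | rfl
  · refine aux_neg_norm hm hsf hdeg hα a 1 (by push_cast; linarith) s ?_
    simpa using hs
  · exact aux_sqfree hm hsf hdeg hα d hd (hsf.squarefree_of_dvd hdm) hne s hs
  · refine aux_neg_norm hm hsf hdeg hα (a * d) d (by push_cast; nlinarith [mul_pos hbq (pow_pos hdq 2)]) s ?_
    have e : ((a * d : ℚ) : K) + ((d : ℚ) : K) * α = (a + α) * d := by push_cast; ring
    rw [e]; exact hs

lemma aux_sum {M : ℕ} (hsf : Squarefree M) (h : ∀ q : ℕ, q.Prime → q ∣ M → q % 4 ≠ 3) :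
    ∃ a b : ℤ, (M : ℤ) = a ^ 2 + b ^ 2 ∧ Odd b ∧ IsCoprime a b := by
  have h1 := (ZMod.isSquare_neg_one_iff_forall_mem_primeFactors_mod_four_ne_three hsf).2
    (fun q hq => h q (Nat.prime_of_mem_primeFactors hq) (Nat.dvd_of_mem_primeFactors hq))
  obtain ⟨x, y, hxy⟩ := Nat.eq_sq_add_sq_of_isSquare_mod_neg_one h1
  have hg : Nat.Coprime x y := by
    have : IsUnit (Nat.gcd x y) := by
      apply hsf
      rw [hxy, ← sq]
      exact dvd_add (pow_dvd_pow_of_dvd (Nat.gcd_dvd_left x y) 2)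
        (pow_dvd_pow_of_dvd (Nat.gcd_dvd_right x y) 2)
    exact Nat.isUnit_iff.1 this
  have hc : IsCoprime (x : ℤ) y := Nat.isCoprime_iff_coprime.2 hg
  rcases Nat.even_or_odd y with hy | hy
  · have hx : Odd x := by
      rw [← Nat.not_even_iff_odd]
      intro hx
      exact Nat.not_coprime_of_dvd_of_dvd one_lt_two hx.two_dvd hy.two_dvd hg
    exact ⟨y, x, by rw [hxy]; push_cast; ring, by exact_mod_cast hx, hc.symm⟩
  · exact ⟨x, y, by rw [hxy]; push_cast; ring, by exact_mod_cast hy, hc⟩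
end aux

/-- Let `m > 1` be a squarefree integer. If the class number of the real quadratic field
`ℚ(√m)` (formalized as any degree-2 number field containing a square root of `m`) is odd,
then either `m` is a prime, or `m = pq` for primes `p` and `q` where `p = 2` or
`p ≡ 3 (mod 4)`, and `q ≡ 3 (mod 4)`. -/
theorem structure_of_m_of_odd_classNumber_real_quadratic
    (m : ℤ) (hm : 1 < m) (hsf : Squarefree m)
    (K : Type) [Field K] [NumberField K]
    (hdeg : Module.finrank ℚ K = 2)
    (α : K) (hα : α ^ 2 = (m : K))
    (hodd : Odd (NumberField.classNumber K)) :
    (∃ p : ℕ, p.Prime ∧ m = (p : ℤ)) ∨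
      (∃ p q : ℕ, p.Prime ∧ q.Prime ∧ (p = 2 ∨ p % 4 = 3) ∧ q % 4 = 3 ∧
        m = (p : ℤ) * q) := by
  obtain ⟨M, rfl⟩ : ∃ M : ℕ, m = M := ⟨m.toNat, by omega⟩
  have hM : 1 < M := by exact_mod_cast hm
  have hMsf : Squarefree M := Int.squarefree_natCast.1 hsf
  by_cases hp : M.Prime
  · exact Or.inl ⟨M, hp, rfl⟩
  right
  by_cases hq : ∃ q : ℕ, q.Prime ∧ q ∣ M ∧ q % 4 = 3
  · obtain ⟨q, hqp, ⟨n, rfl⟩, hq4⟩ := hq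
    have hq1 := hqp.one_lt
    have hn1 : n ≠ 1 := by rintro rfl; rw [mul_one] at hp; exact hp hqp
    have hn0 : n ≠ 0 := by rintro rfl; simp at hM
    by_cases hn : n.Prime
    · by_cases hn4 : n = 2 ∨ n % 4 = 3
      · exact ⟨n, q, hn, hqp, hn4, hq4, by push_cast; ring⟩
      exfalso
      push Not at hn4
      have hn2 : n % 2 = 1 := hn.eq_two_or_odd.resolve_left hn4.1
      have hn4' : n % 4 = 1 := by omega
      have hm4 : (q * n) % 4 = 3 := by rw [Nat.mul_mod, hq4, hn4']
      have hq2 : q % 2 = 1 := by omega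
      refine aux_two_false hm hsf hdeg hα 2 q (by norm_num) (by exact_mod_cast hq1) ?_ ?_ ?_ ?_
        (aux_good_two hα hodd (by exact_mod_cast hm4))
        (aux_good_dvd hsf hα hodd q (by exact_mod_cast hq1) ⟨n, by push_cast; rfl⟩)
      · have : Squarefree (2 * q) := by
          rw [Nat.squarefree_mul_iff]
          refine ⟨?_, Nat.prime_two.squarefree, hqp.squarefree⟩
          rw [Nat.coprime_two_left, Nat.odd_iff]; exact hq2
        exact_mod_cast Int.squarefree_natCast.2 this
      · intro h
        have : 2 = q * n := by exact_mod_cast h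
        omega
      · intro h
        have : q * 1 = q * n := by rw [mul_one]; exact_mod_cast h
        exact hn1 (Nat.eq_of_mul_eq_mul_left (by omega) this).symm
      · intro h
        have : 2 * q = q * n := by exact_mod_cast h
        omega
    · exfalso
      obtain ⟨r, hr, s, rfl⟩ := Nat.exists_prime_and_dvd hn1
      have hs1 : s ≠ 1 := by rintro rfl; rw [mul_one] at hn; exact hn hr
      have hr1 := hr.one_lt
      have hs0 : 0 < s := by
        rcases Nat.eq_zero_or_pos s with h | h
        · subst h; simp at hn0
        · exact h
      have hs2 : 2 ≤ s := by omega
      have hlt : q * r < q * (r * s) := by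
        apply Nat.mul_lt_mul_of_pos_left _ (by omega)
        nlinarith
      refine aux_two_false hm hsf hdeg hα q r (by exact_mod_cast hq1) (by exact_mod_cast hr1)
        ?_ ?_ ?_ ?_
        (aux_good_dvd hsf hα hodd q (by exact_mod_cast hq1) ⟨(r * s : ℕ), by push_cast; rfl⟩)
        (aux_good_dvd hsf hα hodd r (by exact_mod_cast hr1) ⟨(q * s : ℕ), by push_cast; ring⟩)
      · exact hsf.squarefree_of_dvd ⟨s, by push_cast; ring⟩
      · intro h
        have : q = q * (r * s) := by exact_mod_cast h
        nlinarith
      · intro h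
        have : r = q * (r * s) := by exact_mod_cast h
        nlinarith
      · intro h
        have : q * r = q * (r * s) := by exact_mod_cast h
        omega
  · exfalso
    push Not at hq
    obtain ⟨a, b, hab, hb, hc⟩ := aux_sum hMsf hq
    have hd := Nat.minFac_prime (n := M) (by omega)
    rw [hab] at hm hsf hα
    refine aux_sum_false hm hsf hdeg hα hodd hb hc (M.minFac : ℤ)
      (by exact_mod_cast hd.one_lt) (by rw [← hab]; exact_mod_cast M.minFac_dvd) ?_
    rw [← hab]
    intro h
    have h' : M.minFac = M := by exact_mod_cast h
    rw [h'] at hd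
    exact hp hd
end

section
/- (Dirichlet's Lemma) Let χ be a primitive quadratic Dirichlet character modulo n > 1 (i.e., χ is nontrivial, χ² is the trivial character, and χ is primitive). Then there exists a fundamental discriminant Δ with |Δ| = n such that χ(p) = (Δ/p) (the Jacobi symbol of Δ over p) for every odd prime p not dividing 2Δ. -/
/-- An integer `Δ ≠ 1` is a fundamental discriminant if either `Δ ≡ 1 (mod 4)` and `Δ` is
squarefree, or `Δ = 4m` where `m` is a squarefree integer with `m ≡ 2` or `3 (mod 4)`. -/
def IsFundamentalDiscriminant (Δ : ℤ) : Prop :=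
  Δ ≠ 1 ∧ ((Δ % 4 = 1 ∧ Squarefree Δ) ∨
    ∃ m : ℤ, Δ = 4 * m ∧ Squarefree m ∧ (m % 4 = 2 ∨ m % 4 = 3))

section Aux
open DirichletCharacter

lemma aux_ft {n d : ℕ} (hn : 0 < n) (hd : d ∣ n) (χ : DirichletCharacter ℤ n)
    (h : ∀ a : ℤ, IsCoprime a n → (d : ℤ) ∣ a - 1 → χ (a : ZMod n) = 1) :
    FactorsThrough χ d := by
  have : NeZero n := ⟨hn.ne'⟩
  rw [factorsThrough_iff_ker_unitsMap hd]
  intro u hu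
  obtain ⟨a, ha⟩ := ZMod.intCast_surjective (u : ZMod n)
  have hco : IsCoprime a (n : ℤ) := by
    rw [← apply_ne_zero_iff χ a, ha]
    exact (u.isUnit.map χ).ne_zero
  have hda : (d : ℤ) ∣ a - 1 := by
    rw [← ZMod.intCast_zmod_eq_zero_iff_dvd] at *
    rw [MonoidHom.mem_ker, Units.ext_iff, ZMod.unitsMap_val, ← ha] at hu
    push_cast
    rw [ZMod.cast_intCast hd] at hu
    simp [hu]
  have := h a hco hda
  rw [MonoidHom.mem_ker, Units.ext_iff, MulChar.coe_toUnitHom, ← ha, this]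
  rfl

lemma aux_pm {n : ℕ} (χ : DirichletCharacter ℤ n) (hq : χ ^ 2 = 1) (a : ℤ)
    (ha : IsCoprime a (n : ℤ)) : χ (a : ZMod n) = 1 ∨ χ (a : ZMod n) = -1 := by
  have hu : IsUnit (a : ZMod n) := by
    by_contra h
    exact (apply_ne_zero_iff χ a).2 ha (χ.map_nonunit h)
  have : (χ ^ 2) (a : ZMod n) = 1 := by rw [hq, MulChar.one_apply hu]
  rw [MulChar.pow_apply' _ (by norm_num)] at this
  exact eq_or_eq_neg_of_sq_eq_sq _ 1 (by simpa using this)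

lemma aux_per {n : ℕ} (χ : DirichletCharacter ℤ n) {a b : ℤ} (h : (n : ℤ) ∣ a - b) :
    χ (a : ZMod n) = χ (b : ZMod n) := by
  congr 1
  exact (ZMod.intCast_eq_intCast_iff_dvd_sub _ _ _).2 (by rwa [dvd_sub_comm])

lemma aux_sq {n : ℕ} (χ : DirichletCharacter ℤ n) (hq : χ ^ 2 = 1) {a b : ℤ}
    (ha : IsCoprime a (n : ℤ)) (h : (n : ℤ) ∣ a - b ^ 2) : χ (a : ZMod n) = 1 := by
  have h1 := aux_per χ h
  push_cast at h1
  rw [map_pow] at h1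
  rcases aux_pm χ hq a ha with h2 | h2
  · exact h2
  · nlinarith [sq_nonneg (χ (b : ZMod n))]

lemma aux_prim {n d : ℕ} (hn : 0 < n) (hd : d ∣ n) (hdn : d < n) (χ : DirichletCharacter ℤ n)
    (hq : χ ^ 2 = 1) (hp : χ.IsPrimitive) :
    ∃ a : ℤ, IsCoprime a (n : ℤ) ∧ (d : ℤ) ∣ a - 1 ∧ χ (a : ZMod n) = -1 := by
  by_contra! H
  have h1 : FactorsThrough χ d := aux_ft hn hd χ fun a ha hda =>
    (aux_pm χ hq a ha).resolve_right (H a ha hda)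
  have := conductor_le_conductor_mem_conductorSet (χ := χ) h1
  rw [isPrimitive_def] at hp
  have h2 : χ.conductor ≤ d := Nat.sInf_le h1
  omega

lemma aux_odd_sq {n q : ℕ} (hn : 0 < n) (hq : q.Prime) (hq2 : q ≠ 2) (χ : DirichletCharacter ℤ n)
    (hχ : χ ^ 2 = 1) (hp : χ.IsPrimitive) : ¬ q * q ∣ n := by
  rintro ⟨c, rfl⟩
  have hc : 0 < c := Nat.pos_of_mul_pos_left hn |> fun _ => by
    rcases Nat.eq_zero_or_pos c with h | h
    · simp [h] at hn
    · exact h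
  obtain ⟨a, ha, ⟨t, ht⟩, hχa⟩ := aux_prim (d := q * c) hn ⟨q, by ring⟩
    (by nlinarith [hq.two_le, Nat.mul_pos hq.pos hc]) χ hχ hp
  have h1 : ((q * q * c : ℕ) : ℤ) ∣ a ^ q - 1 := by
    have ha' : a = 1 + q * c * t := by push_cast at ht; linarith
    obtain ⟨k, hk⟩ := Polynomial.powAddExpansion (1 : ℤ) ((q:ℤ) * c * t) q
    rw [ha', hk]
    refine ⟨t + k * c * t ^ 2, ?_⟩
    push_cast
    rw [one_pow, one_pow]
    ring
  have h2 := aux_per χ h1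
  push_cast at h2
  rw [map_pow, hχa, (hq.odd_of_ne_two hq2).neg_one_pow, map_one] at h2
  norm_num at h2

lemma aux_sixteen {n : ℕ} (hn : 0 < n) (χ : DirichletCharacter ℤ n)
    (hχ : χ ^ 2 = 1) (hp : χ.IsPrimitive) : ¬ 16 ∣ n := by
  rintro ⟨c, rfl⟩
  obtain ⟨a, ha, ⟨t, ht⟩, hχa⟩ := aux_prim (d := 8 * c) hn ⟨2, by ring⟩ (by omega) χ hχ hp
  have := aux_sq χ hχ (b := 1 + 4 * c * t) ha ⟨- c * t ^ 2, by push_cast at *; linear_combination ht⟩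
  rw [this] at hχa
  norm_num at hχa

lemma aux_two {n : ℕ} (hn : 0 < n) (χ : DirichletCharacter ℤ n)
    (hχ : χ ^ 2 = 1) (hp : χ.IsPrimitive) : ¬ n % 4 = 2 := by
  intro h
  obtain ⟨c, rfl⟩ : 2 ∣ n := by omega
  obtain ⟨a, ha, hda, hχa⟩ := aux_prim (d := c) hn ⟨2, by ring⟩ (by omega) χ hχ hp
  have h2 : (2 : ℤ) ∣ a - 1 := by
    have : IsCoprime a 2 := ha.of_isCoprime_of_dvd_right (by push_cast; exact dvd_mul_right _ _)
    have := Int.isCoprime_iff_gcd_eq_one.1 this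
    by_contra h3
    have h4 : (2:ℤ) ∣ a := by omega
    have := Int.dvd_coe_gcd h4 (dvd_refl 2)
    omega
  have h3 : ((2 * c : ℕ) : ℤ) ∣ a - 1 := by
    push_cast
    refine IsCoprime.mul_dvd ?_ h2 hda
    rw [show (2:ℤ) = ((2:ℕ):ℤ) by rfl, Nat.isCoprime_iff_coprime, Nat.coprime_two_left]
    rw [Nat.odd_iff]; omega
  have h4 := aux_per χ h3
  rw [hχa] at h4
  norm_num at h4

lemma aux_quad_char (q : ℕ) [Fact q.Prime] (a : ℤ) :
    quadraticChar (ZMod q) (a : ZMod q) = legendreSym q a := rfl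

lemma aux_coprime_unit {n : ℕ} (χ : DirichletCharacter ℤ n) {a : ℤ} (ha : IsUnit (a : ZMod n)) :
    IsCoprime a (n : ℤ) := (apply_ne_zero_iff χ a).1 (ha.map χ).ne_zero

/-- Removing an odd prime `q` from a primitive quadratic character. -/
lemma aux_descend {q m : ℕ} [Fact q.Prime] (hm : 0 < m) (hqm : Nat.Coprime q m)
    (χ : DirichletCharacter ℤ (q * m)) (hχ : χ ^ 2 = 1) (hp : χ.IsPrimitive) :
    ∃ ψ : DirichletCharacter ℤ m, ψ ^ 2 = 1 ∧ ψ.IsPrimitive ∧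
      ∀ a : ℤ, IsCoprime a ((q * m : ℕ) : ℤ) →
        χ (a : ZMod (q * m)) = legendreSym q a * ψ (a : ZMod m) := by
  have hqp : q.Prime := Fact.out
  have hn : 0 < q * m := Nat.mul_pos hqp.pos hm
  have : NeZero (q * m) := ⟨hn.ne'⟩
  have hco : IsCoprime (q : ℤ) (m : ℤ) := Nat.isCoprime_iff_coprime.2 hqm
  let ρ : DirichletCharacter ℤ q := quadraticChar (ZMod q)
  have hρ2 : ρ ^ 2 = 1 := (quadraticChar_isQuadratic (ZMod q)).sq_eq_one
  let κ : DirichletCharacter ℤ (q * m) := changeLevel (Dvd.intro _ rfl) ρ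
  have hκ2 : κ ^ 2 = 1 := by rw [← map_pow, hρ2, map_one]
  have hκ : ∀ a : ℤ, IsCoprime a ((q * m : ℕ) : ℤ) → κ (a : ZMod (q * m)) = legendreSym q a :=
    fun a ha => changeLevel_eq_cast_of_dvd' ρ _ ha
  have hcq : ∀ a : ℤ, IsCoprime a ((q * m : ℕ) : ℤ) → (a : ZMod q) ≠ 0 := by
    intro a ha h0
    rw [ZMod.intCast_zmod_eq_zero_iff_dvd] at h0
    have h1 : IsCoprime a (q : ℤ) := ha.of_isCoprime_of_dvd_right (by push_cast; exact dvd_mul_right _ _)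
    have h2 := h1.isUnit_of_dvd' h0 dvd_rfl
    exact (Nat.prime_iff_prime_int.1 hqp).not_isUnit h2
  -- squares mod `q`
  have key : ∀ a : ℤ, IsCoprime a ((q * m : ℕ) : ℤ) → (m : ℤ) ∣ a - 1 → legendreSym q a = 1 →
      χ (a : ZMod (q * m)) = 1 := by
    intro a ha hma hl
    obtain ⟨b, hb⟩ := (legendreSym.eq_one_iff q (hcq a ha)).1 hl
    obtain ⟨b, rfl⟩ := ZMod.intCast_surjective b
    have hqb : (q : ℤ) ∣ a - b * b := by
      rw [← ZMod.intCast_zmod_eq_zero_iff_dvd]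
      push_cast
      rw [hb, sub_self]
    obtain ⟨u, v, huv⟩ := hco
    refine aux_sq χ hχ (b := u * q + b * (v * m)) ha ?_
    push_cast
    refine IsCoprime.mul_dvd (Nat.isCoprime_iff_coprime.2 hqm) ?_ ?_
    · have e : a - (u * q + b * (v * m)) ^ 2
        = (a - b * b) + q * (u * (b - 1) * (2 * b - u * q * (b - 1))) := by
        have : v * m = 1 - u * q := by linarith
        rw [this]; ring
      rw [e]
      exact dvd_add hqb (dvd_mul_right _ _)
    · have e : a - (u * q + b * (v * m)) ^ 2
        = (a - 1) + m * (- (v * (b - 1)) * (2 + v * m * (b - 1))) := by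
        have : u * q = 1 - v * m := by linarith
        rw [this]; ring
      rw [e]
      exact dvd_add hma (dvd_mul_right _ _)
  obtain ⟨a₀, ha₀, hma₀, hχa₀⟩ := aux_prim (d := m) hn (Dvd.intro_left _ rfl)
    (by nlinarith [hqp.two_le]) χ hχ hp
  have hl₀ : legendreSym q a₀ = -1 := by
    rcases legendreSym.eq_one_or_neg_one q (hcq a₀ ha₀) with h | h
    · rw [key a₀ ha₀ hma₀ h] at hχa₀
      norm_num at hχa₀
    · exact h
  have hft : FactorsThrough (χ * κ) m := by
    refine aux_ft hn (Dvd.intro_left _ rfl) _ fun a ha hma => ?_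
    rw [MulChar.mul_apply, hκ a ha]
    rcases legendreSym.eq_one_or_neg_one q (hcq a ha) with h | h
    · rw [key a ha hma h, h]; rfl
    · have h1 := key (a * a₀) (ha.mul_left ha₀) ?_ (by rw [legendreSym.mul, h, hl₀]; rfl)
      · push_cast at h1
        rw [map_mul, hχa₀] at h1
        rw [h]; exact h1
      · have : a * a₀ - 1 = (a - 1) * a₀ + (a₀ - 1) := by ring
        rw [this]
        exact dvd_add (hma.mul_right _) hma₀
  obtain ⟨hd, ψ, hψ⟩ := hft
  have hχe : χ = changeLevel hd ψ * κ := by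
    rw [← hψ, mul_assoc, ← sq, hκ2, mul_one]
  refine ⟨ψ, ?_, ?_, ?_⟩
  · apply changeLevel_injective hd
    rw [map_pow, ← hψ, mul_pow, hχ, hκ2, map_one, mul_one]
  · have h1 := conductor_mul_dvd_lcm_conductor (changeLevel hd ψ) κ
    rw [← hχe, (isPrimitive_def _).1 hp, conductor_changeLevel, conductor_changeLevel] at h1
    have h2 : q * m ∣ q * ψ.conductor :=
      (h1.trans (Nat.lcm_dvd_mul _ _)).trans
        (by rw [mul_comm]; exact Nat.mul_dvd_mul_right ρ.conductor_dvd_level _)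
    exact Nat.dvd_antisymm ψ.conductor_dvd_level (Nat.dvd_of_mul_dvd_mul_left hqp.pos h2)
  · intro a ha
    have := hκ a ha
    conv_lhs => rw [hχe]
    rw [MulChar.mul_apply, this, changeLevel_eq_cast_of_dvd' ψ hd ha, mul_comm]

/-- `Δ` is `1` or a fundamental discriminant. -/
def AuxFD (Δ : ℤ) : Prop :=
  (Δ % 4 = 1 ∧ Squarefree Δ) ∨ ∃ m : ℤ, Δ = 4 * m ∧ Squarefree m ∧ (m % 4 = 2 ∨ m % 4 = 3)

lemma aux_star (q : ℕ) (hq : q.Prime) (hq2 : q ≠ 2) :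
    ∃ s : ℤ, s.natAbs = q ∧ s % 4 = 1 ∧ ∀ p : ℕ, Odd p → jacobiSym s p = jacobiSym p q := by
  have hodd := hq.odd_of_ne_two hq2
  have h4 : q % 4 = 1 ∨ q % 4 = 3 := by have := Nat.odd_iff.1 hodd; omega
  rcases h4 with h | h
  · exact ⟨q, by simp, by omega, fun p hp => jacobiSym.quadratic_reciprocity_one_mod_four h hp⟩
  · refine ⟨-q, by simp, by omega, fun p hp => ?_⟩
    rw [jacobiSym.neg _ hp]
    have h4 : p % 4 = 1 ∨ p % 4 = 3 := by have := Nat.odd_iff.1 hp; omega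
    rcases h4 with h' | h'
    · rw [ZMod.χ₄_nat_one_mod_four h', one_mul,
        jacobiSym.quadratic_reciprocity_one_mod_four' hodd h']
    · rw [ZMod.χ₄_nat_three_mod_four h', jacobiSym.quadratic_reciprocity_three_mod_four h h']
      ring

lemma aux_FD_mul {s Δ : ℤ} (hs : s % 4 = 1) (hsf : Squarefree s) (hco : IsCoprime s Δ)
    (h : AuxFD Δ) : AuxFD (s * Δ) := by
  rcases h with ⟨h1, h2⟩ | ⟨m, rfl, h2, h3⟩
  · left
    exact ⟨by rw [Int.mul_emod, hs, h1]; rfl, squarefree_mul_iff.2 ⟨hco.isRelPrime, hsf, h2⟩⟩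
  · right
    refine ⟨s * m, by ring, squarefree_mul_iff.2 ⟨(IsCoprime.of_mul_right_right hco).isRelPrime, hsf, h2⟩, ?_⟩
    rw [Int.mul_emod, hs]
    omega

lemma aux_base (n : ℕ) (hn : n = 1 ∨ n = 4 ∨ n = 8) (χ : DirichletCharacter ℤ n)
    (hχ : χ ^ 2 = 1) (hp : χ.IsPrimitive) :
    ∃ Δ : ℤ, AuxFD Δ ∧ Δ.natAbs = n ∧ ∀ p : ℕ, Odd p → Nat.Coprime p n →
      χ (p : ZMod n) = jacobiSym Δ p := by
  have sq2 : Squarefree (2 : ℤ) := Int.prime_two.squarefree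
  rcases hn with rfl | rfl | rfl
  · refine ⟨1, Or.inl ⟨by norm_num, squarefree_one⟩, rfl, fun p _ _ => ?_⟩
    rw [jacobiSym.one_left, Subsingleton.elim (p : ZMod 1) 1, map_one]
  · refine ⟨-4, Or.inr ⟨-1, by norm_num, IsUnit.squarefree (by simp), by norm_num⟩, rfl,
      fun p ho _ => ?_⟩
    obtain ⟨a, ha, hda, hχa⟩ := aux_prim (d := 2) (by norm_num) (by norm_num) (by norm_num) χ hχ hp
    have h3 : χ ((3 : ℤ) : ZMod 4) = -1 := by
      have : a % 4 = 1 ∨ a % 4 = 3 := by omega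
      rcases this with h | h
      · have := aux_per χ (a := a) (b := 1) (by push_cast; omega)
        simp [hχa] at this
      · rw [← hχa]; exact aux_per χ (by push_cast; omega)
    rw [jacobiSym.neg _ ho, jacobiSym.at_four ho, mul_one]
    have h4 : p % 4 = 1 ∨ p % 4 = 3 := by have := Nat.odd_iff.1 ho; omega
    have hc : (p : ZMod 4) = ((p : ℤ) : ZMod 4) := by push_cast; rfl
    rcases h4 with h' | h'
    · rw [ZMod.χ₄_nat_one_mod_four h', hc, aux_per χ (a := p) (b := 1) (by push_cast; omega)]
      simp
    · rw [ZMod.χ₄_nat_three_mod_four h', hc, aux_per χ (a := p) (b := 3) (by push_cast; omega), h3]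
  · obtain ⟨a, ha, hda, hχa⟩ := aux_prim (d := 4) (by norm_num) (by norm_num) (by norm_num) χ hχ hp
    have h5 : χ ((5 : ℤ) : ZMod 8) = -1 := by
      have : a % 8 = 1 ∨ a % 8 = 5 := by omega
      rcases this with h | h
      · have := aux_per χ (a := a) (b := 1) (by push_cast; omega)
        simp [hχa] at this
      · rw [← hχa]; exact aux_per χ (by push_cast; omega)
    have h7 : χ ((7 : ℤ) : ZMod 8) = - χ ((3 : ℤ) : ZMod 8) := by
      rw [aux_per χ (a := 7) (b := 3 * 5) (by norm_num)]
      rw [Int.cast_mul, map_mul, h5]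
      ring
    have hper : ∀ p r : ℕ, p % 8 = r → χ (p : ZMod 8) = χ ((r : ℤ) : ZMod 8) := by
      intro p r h
      have hc : (p : ZMod 8) = ((p : ℤ) : ZMod 8) := by push_cast; rfl
      rw [hc]; exact aux_per χ (by push_cast; omega)
    have h1 : χ ((1 : ℤ) : ZMod 8) = 1 := by simp
    have hcases : ∀ p : ℕ, Odd p → p % 8 = 1 ∨ p % 8 = 3 ∨ p % 8 = 5 ∨ p % 8 = 7 := by
      intro p ho; have := Nat.odd_iff.1 ho; omega
    rcases aux_pm χ hχ 3 (by norm_num) with h3 | h3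
    · refine ⟨-8, Or.inr ⟨-2, by norm_num, Int.squarefree_natAbs.1 (by simpa using Nat.prime_two.prime.squarefree), by norm_num⟩, rfl, fun p ho _ => ?_⟩
      rw [show (-8 : ℤ) = 4 * -2 by norm_num, jacobiSym.mul_left, jacobiSym.at_four ho, one_mul,
        jacobiSym.at_neg_two ho, ZMod.χ₈'_nat_eq_if_mod_eight]
      have := Nat.odd_iff.1 ho
      rcases hcases p ho with h | h | h | h <;> rw [hper p _ h] <;> push_cast at * <;>
        simp_all
    · refine ⟨8, Or.inr ⟨2, by norm_num, sq2, by norm_num⟩, rfl, fun p ho _ => ?_⟩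
      rw [show (8 : ℤ) = 4 * 2 by norm_num, jacobiSym.mul_left, jacobiSym.at_four ho, one_mul,
        jacobiSym.at_two ho, ZMod.χ₈_nat_eq_if_mod_eight]
      have := Nat.odd_iff.1 ho
      rcases hcases p ho with h | h | h | h <;> rw [hper p _ h] <;> push_cast at * <;>
        simp_all

lemma aux_main (n : ℕ) : 0 < n → ∀ (χ : DirichletCharacter ℤ n)
    (_ : χ ^ 2 = 1) (_ : χ.IsPrimitive),
    ∃ Δ : ℤ, AuxFD Δ ∧ Δ.natAbs = n ∧ ∀ p : ℕ, Odd p → Nat.Coprime p n →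
      χ (p : ZMod n) = jacobiSym Δ p := by
  induction n using Nat.strong_induction_on with
  | _ n ih =>
  intro hn χ hχ hp
  by_cases hex : ∃ q : ℕ, q.Prime ∧ q ≠ 2 ∧ q ∣ n
  · obtain ⟨q, hq, hq2, m, rfl⟩ := hex
    have : Fact q.Prime := ⟨hq⟩
    have hm : 0 < m := Nat.pos_of_mul_pos_right hn |> fun _ => by
      rcases Nat.eq_zero_or_pos m with h | h
      · simp [h] at hn
      · exact h
    have hqm : Nat.Coprime q m := by
      rw [hq.coprime_iff_not_dvd]
      intro h
      exact aux_odd_sq hn hq hq2 χ hχ hp (Nat.mul_dvd_mul_left q h)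
    obtain ⟨ψ, hψ, hψp, hψe⟩ := aux_descend hm hqm χ hχ hp
    obtain ⟨Δ, h1, h2, h3⟩ := ih m (by nlinarith [hq.two_le]) hm ψ hψ hψp
    obtain ⟨s, hs1, hs2, hs3⟩ := aux_star q hq hq2
    refine ⟨s * Δ, aux_FD_mul hs2 ?_ ?_ h1, by rw [Int.natAbs_mul, hs1, h2], fun p ho hpc => ?_⟩
    · rw [← Int.squarefree_natAbs, hs1]; exact hq.prime.squarefree
    · rw [Int.isCoprime_iff_gcd_eq_one, Int.gcd, hs1, h2]; exact hqm
    · have := hψe p (Nat.isCoprime_iff_coprime.2 hpc)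
      push_cast at this
      rw [this, jacobiSym.mul_left, h3 p ho (Nat.Coprime.coprime_mul_left_right hpc), hs3 p ho,
        jacobiSym.legendreSym.to_jacobiSym]
  · refine aux_base n ?_ χ hχ hp
    push Not at hex
    have h2 : n = 2 ^ n.primeFactorsList.length :=
      Nat.eq_prime_pow_of_unique_prime_dvd hn.ne' fun {d} hd hdn => by
        by_contra h
        exact hex d hd h hdn
    have h16 := aux_sixteen hn χ hχ hp
    have h22 := aux_two hn χ hχ hp
    generalize n.primeFactorsList.length = k at h2
    have hk : k < 4 := by
      by_contra hk
      exact h16 (h2 ▸ pow_dvd_pow 2 (by omega : 4 ≤ k))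
    interval_cases k <;> omega

end Aux

/-- (Dirichlet's Lemma) Let `χ` be a primitive quadratic Dirichlet character modulo `n > 1`
(i.e. `χ` is nontrivial, `χ²` is the trivial character, and `χ` is primitive). Then there
exists a fundamental discriminant `Δ` with `|Δ| = n` such that `χ(p)` equals the Jacobi
symbol `(Δ/p)` for every odd prime `p` not dividing `2Δ`. -/
theorem dirichlets_lemma
    (n : ℕ) (hn : 1 < n) (χ : DirichletCharacter ℤ n)
    (hχ_nontriv : χ ≠ 1) (hχ_quad : χ ^ 2 = 1) (hχ_prim : χ.IsPrimitive) :
    ∃ Δ : ℤ, IsFundamentalDiscriminant Δ ∧ Δ.natAbs = n ∧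
      ∀ p : ℕ, p.Prime → Odd p → ¬ ((p : ℤ) ∣ 2 * Δ) →
        χ ((p : ℕ) : ZMod n) = jacobiSym Δ p := by
  have hn0 : 0 < n := by omega
  obtain ⟨Δ, h1, h2, h3⟩ := aux_main n hn0 χ hχ_quad hχ_prim
  refine ⟨Δ, ⟨?_, h1⟩, h2, fun p hp ho hpd => h3 p ho ?_⟩
  · rintro rfl
    simp at h2
    omega
  · rw [hp.coprime_iff_not_dvd, ← h2]
    intro h
    exact hpd ((Int.natCast_dvd.2 h).mul_left 2)
end
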